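/- arXiv:1909.13320 — 2 statements merged into one kernel-verified Lean document; each statement's English description precedes it below -/
import Mathlib

section
/- For every ε > 0 there exists δ > 0 such that for any probability distribution p on a countable alphabet Σ with sup_{σ∈Σ} p(σ) < δ, there exists an infinite sequence s : ℕ → Σ with density p and quasi-regularity QR(s) ≤ 1 + ε. -/
open scoped ENNReal Classical

/-- `MaxGap s σ` : the supremum of distances between consecutive appearances of `σ` in `s`. -/
noncomputable def MaxGap {α : Type*} (s : ℕ → α) (σ : α) : ℝ≥0∞ :=
  sSup ((fun n : ℕ => (n : ℝ≥0∞)) ''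
    {n | 1 ≤ n ∧ ∃ k : ℕ, ∀ i : ℕ, k < i → i < k + n → s i ≠ σ})

/-- `MinGap s σ` : the infimum of distances between consecutive appearances of `σ` in `s`. -/
noncomputable def MinGap {α : Type*} (s : ℕ → α) (σ : α) : ℝ≥0∞ :=
  sInf ((fun n : ℕ => (n : ℝ≥0∞)) ''
    {n | 1 ≤ n ∧ ∃ k : ℕ, s k = σ ∧ s (k + n) = σ})

/-- Quasi-regularity of a character `σ` in the sequence `s`, with the convention `∞/∞ = 1`. -/
noncomputable def QRchar {α : Type*} (s : ℕ → α) (σ : α) : ℝ≥0∞ :=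
  if MaxGap s σ = ⊤ ∧ MinGap s σ = ⊤ then 1 else MaxGap s σ / MinGap s σ

/-- Quasi-regularity of a sequence. -/
noncomputable def QR {α : Type*} (s : ℕ → α) : ℝ≥0∞ := ⨆ σ : α, QRchar s σ

/-- `s` has density `p`. -/
def HasDensity {α : Type*} (s : ℕ → α) (p : α → ℝ) : Prop :=
  ∀ σ : α, Filter.Tendsto
    (fun n : ℕ => ({i : ℕ | i < n ∧ s i = σ}.ncard : ℝ) / (n : ℝ))
    Filter.atTop (nhds (p σ))


namespace QRaux

lemma rem_succ (z : ℤ) (a : ℤ) (ha : 0 < a) :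
    (z % a = 0 → (z - 1) % a = a - 1) ∧ (z % a ≠ 0 → (z - 1) % a = z % a - 1) := by
  have h := Int.emod_add_mul_ediv z a
  have h1 := Int.emod_nonneg z ha.ne'
  have h2 := Int.emod_lt_of_pos z ha
  constructor
  · intro h0
    have : z - 1 = (a - 1) + a * (z / a - 1) := by rw [h0] at h; linarith
    rw [this, Int.add_mul_emod_self_left, Int.emod_eq_of_lt (by omega) (by omega)]
  · intro h0
    have : z - 1 = (z % a - 1) + a * (z / a) := by linarith
    rw [this, Int.add_mul_emod_self_left, Int.emod_eq_of_lt (by omega) (by omega)]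

lemma rem_zero_iff (a : ℕ) [NeZero a] (c : Fin a) (u : ℕ) :
    ((c : ℤ) - u) % a = 0 ↔ c = Fin.ofNat a u := by
  rw [← Int.emod_emod_of_dvd _ (dvd_refl (a:ℤ)), ← Int.dvd_iff_emod_eq_zero]
  rw [Fin.ext_iff]
  simp only [Fin.val_ofNat]
  constructor
  · intro h
    have h3 : (a:ℤ) ∣ (c:ℤ) - u := by
      rw [Int.dvd_iff_emod_eq_zero] at h ⊢
      simpa using h
    have h4 : u ≡ c [MOD a] := (Nat.modEq_iff_dvd).2 h3
    have := h4.symm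
    unfold Nat.ModEq at this
    rw [Nat.mod_eq_of_lt c.2] at this
    exact this
  · intro h
    have h4 : u ≡ c [MOD a] := by
      unfold Nat.ModEq; rw [h]; simp
    have := (Nat.modEq_iff_dvd).1 h4
    rw [Int.dvd_iff_emod_eq_zero] at this ⊢
    simpa using this

/-- all the data of the two-loop process -/
structure Loop (ι : Type) (a b : ℕ) [NeZero a] [NeZero b] (r : ι → ℝ) where
  e : ℕ → (Fin a ⊕ Fin b ≃ ι)
  d : ℕ → ι → ℝ
  d0 : ∀ i, d 0 i = 0
  he : ∀ u, (d u (e u (Sum.inl (Fin.ofNat a u))) < d u (e u (Sum.inr (Fin.ofNat b u))) ∧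
      e (u+1) = (Equiv.swap (Sum.inl (Fin.ofNat a u)) (Sum.inr (Fin.ofNat b u))).trans (e u)) ∨
      (d u (e u (Sum.inr (Fin.ofNat b u))) ≤ d u (e u (Sum.inl (Fin.ofNat a u))) ∧ e (u+1) = e u)
  hd : ∀ u i, d (u+1) i = d u i + 2 * r i -
    Sum.elim (fun _ => 1/(a:ℝ)) (fun _ => 1/(b:ℝ)) ((e (u+1)).symm i)

lemma exists_loop {ι : Type} {a b : ℕ} [NeZero a] [NeZero b] (r : ι → ℝ)
    (e0 : Fin a ⊕ Fin b ≃ ι) : Nonempty (Loop ι a b r) := by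
  let E : ℕ → (Fin a ⊕ Fin b ≃ ι) × (ι → ℝ) → (Fin a ⊕ Fin b ≃ ι) := fun u p =>
    if p.2 (p.1 (Sum.inl (Fin.ofNat a u))) < p.2 (p.1 (Sum.inr (Fin.ofNat b u))) then
      (Equiv.swap (Sum.inl (Fin.ofNat a u)) (Sum.inr (Fin.ofNat b u))).trans p.1 else p.1
  let S : ℕ → (Fin a ⊕ Fin b ≃ ι) × (ι → ℝ) := fun n => Nat.rec (e0, fun _ => 0)
    (fun u p => (E u p, fun i => p.2 i + 2 * r i -
      Sum.elim (fun _ => 1/(a:ℝ)) (fun _ => 1/(b:ℝ)) ((E u p).symm i))) n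
  refine ⟨⟨fun u => (S u).1, fun u => (S u).2, fun i => rfl, fun u => ?_, fun u i => rfl⟩⟩
  by_cases h : (S u).2 ((S u).1 (Sum.inl (Fin.ofNat a u))) < (S u).2 ((S u).1 (Sum.inr (Fin.ofNat b u)))
  · left
    refine ⟨h, ?_⟩
    show E u (S u) = _
    simp only [E, if_pos h]
  · right
    refine ⟨not_lt.1 h, ?_⟩
    show E u (S u) = _
    simp only [E, if_neg h]

namespace Loop
variable {ι : Type} {a b : ℕ} [NeZero a] [NeZero b] {r : ι → ℝ} (L : Loop ι a b r)

lemma inl_ne (u : ℕ) (c : Fin a) (h : c ≠ Fin.ofNat a u) :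
    L.e (u+1) (Sum.inl c) = L.e u (Sum.inl c) := by
  rcases L.he u with ⟨_, h2⟩ | ⟨_, h2⟩
  · rw [h2, Equiv.trans_apply, Equiv.swap_apply_of_ne_of_ne] <;> simp [h, -Fin.ofNat_eq_cast]
  · rw [h2]

lemma inr_ne (u : ℕ) (c : Fin b) (h : c ≠ Fin.ofNat b u) :
    L.e (u+1) (Sum.inr c) = L.e u (Sum.inr c) := by
  rcases L.he u with ⟨_, h2⟩ | ⟨_, h2⟩
  · rw [h2, Equiv.trans_apply, Equiv.swap_apply_of_ne_of_ne] <;> simp [h, -Fin.ofNat_eq_cast]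
  · rw [h2]

lemma sorted (u : ℕ) : L.d u (L.e (u+1) (Sum.inr (Fin.ofNat b u))) ≤
    L.d u (L.e (u+1) (Sum.inl (Fin.ofNat a u))) := by
  rcases L.he u with ⟨h1, h2⟩ | ⟨h1, h2⟩
  · rw [h2]; simpa using h1.le
  · rw [h2]; exact h1

lemma inl_le (u : ℕ) (c : Fin a) :
    L.d u (L.e u (Sum.inl c)) ≤ L.d u (L.e (u+1) (Sum.inl c)) := by
  by_cases h : c = Fin.ofNat a u
  · subst h
    rcases L.he u with ⟨h1, h2⟩ | ⟨h1, h2⟩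
    · rw [h2]; simpa using h1.le
    · rw [h2]
  · rw [L.inl_ne u c h]

lemma inr_le (u : ℕ) (c : Fin b) :
    L.d u (L.e (u+1) (Sum.inr c)) ≤ L.d u (L.e u (Sum.inr c)) := by
  by_cases h : c = Fin.ofNat b u
  · subst h
    rcases L.he u with ⟨h1, h2⟩ | ⟨h1, h2⟩
    · rw [h2]; simpa using h1.le
    · rw [h2]
  · rw [L.inr_ne u c h]

noncomputable def rate (a b : ℕ) : Fin a ⊕ Fin b → ℝ := Sum.elim (fun _ => 1/(a:ℝ)) (fun _ => 1/(b:ℝ))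

lemma rate_bd (x : Fin a ⊕ Fin b) : 0 ≤ rate a b x ∧ rate a b x ≤ 1 := by
  have ha : (1:ℝ) ≤ a := by exact_mod_cast Nat.one_le_iff_ne_zero.2 (NeZero.ne a)
  have hb : (1:ℝ) ≤ b := by exact_mod_cast Nat.one_le_iff_ne_zero.2 (NeZero.ne b)
  rcases x with x | x
  · simp only [rate, Sum.elim_inl]
    exact ⟨by positivity, by rw [div_le_one (by linarith)]; exact ha⟩
  · simp only [rate, Sum.elim_inr]
    exact ⟨by positivity, by rw [div_le_one (by linarith)]; exact hb⟩

noncomputable def rem (a b : ℕ) (u : ℕ) : Fin a ⊕ Fin b → ℝ :=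
  Sum.elim (fun c => ((((c:ℤ) - u) % a : ℤ) : ℝ)/a) (fun c => ((((c:ℤ) - u) % b : ℤ) : ℝ)/b)

lemma rem_bd (u : ℕ) (x : Fin a ⊕ Fin b) : 0 ≤ rem a b u x ∧ rem a b u x ≤ 1 := by
  have key : ∀ (a : ℕ) [NeZero a] (z : ℤ), 0 ≤ ((z % a : ℤ) : ℝ) / a ∧ ((z % a : ℤ) : ℝ) / a ≤ 1 := by
    intro a _ z
    have ha : (0:ℤ) < a := by exact_mod_cast Nat.pos_of_ne_zero (NeZero.ne a)
    have ha' : (0:ℝ) < a := by exact_mod_cast ha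
    have h1 := Int.emod_nonneg z ha.ne'
    have h2 := (Int.emod_lt_of_pos z ha).le
    have h1' : (0:ℝ) ≤ ((z % a : ℤ) : ℝ) := by exact_mod_cast h1
    have h2' : ((z % a : ℤ) : ℝ) ≤ a := by exact_mod_cast h2
    exact ⟨by positivity, by rw [div_le_one ha']; exact h2'⟩
  rcases x with x | x
  · exact key a _
  · exact key b _

/-- the letter `i` is output at step `u` -/
def out (i : ι) (u : ℕ) : Prop :=
  L.e (u+1) (Sum.inl (Fin.ofNat a u)) = i ∨ L.e (u+1) (Sum.inr (Fin.ofNat b u)) = i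

lemma rem_step (a : ℕ) [NeZero a] (c : Fin a) (u : ℕ) :
    (c = Fin.ofNat a u → ((((c:ℤ) - (u+1:ℕ)) % a : ℤ) : ℝ)/a = 1 - 1/a ∧
      ((((c:ℤ) - u) % a : ℤ) : ℝ)/a = 0) ∧
    (c ≠ Fin.ofNat a u → ((((c:ℤ) - (u+1:ℕ)) % a : ℤ) : ℝ)/a =
      ((((c:ℤ) - u) % a : ℤ) : ℝ)/a - 1/a) := by
  have ha : (0:ℤ) < a := by exact_mod_cast Nat.pos_of_ne_zero (NeZero.ne a)
  have ha' : (0:ℝ) < a := by exact_mod_cast ha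
  have h := rem_succ ((c:ℤ) - u) a ha
  have e : (c:ℤ) - (u+1:ℕ) = (c:ℤ) - u - 1 := by push_cast; ring
  constructor
  · intro hc
    have h0 := (rem_zero_iff a c u).2 hc
    rw [e, h.1 h0, h0]
    constructor
    · push_cast; field_simp
    · simp
  · intro hc
    have h0 : ((c:ℤ) - u) % a ≠ 0 := fun h => hc ((rem_zero_iff a c u).1 h)
    rw [e, h.2 h0]
    push_cast; field_simp

lemma psi_step (i : ι) (u : ℕ) :
    rem a b (u+1) ((L.e (u+1)).symm i) = rem a b u ((L.e u).symm i)
      + (if L.out i u then 1 else 0) - rate a b ((L.e (u+1)).symm i) := by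
  -- rem at touched locations is zero
  have touched : L.out i u → rem a b u ((L.e u).symm i) = 0 := by
    intro ho
    have hx : (L.e u).symm i = Sum.inl (Fin.ofNat a u) ∨ (L.e u).symm i = Sum.inr (Fin.ofNat b u) := by
      simp only [Equiv.symm_apply_eq]
      rcases L.he u with ⟨_, h2⟩ | ⟨_, h2⟩
      · unfold out at ho
        rw [h2] at ho
        simp at ho
        rcases ho with h | h
        · right; exact h.symm
        · left; exact h.symm
      · unfold out at ho
        rw [h2] at ho
        rcases ho with h | h
        · left; exact h.symm
        · right; exact h.symm
    rcases hx with h | h <;> rw [h]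
    · exact ((rem_step a (Fin.ofNat a u) u).1 rfl).2
    · exact ((rem_step b (Fin.ofNat b u) u).1 rfl).2
  rcases hx : (L.e (u+1)).symm i with c | c
  · have hi : L.e (u+1) (Sum.inl c) = i := by rw [← hx]; simp
    by_cases hc : c = Fin.ofNat a u
    · have ho : L.out i u := Or.inl (by rw [← hc]; exact hi)
      rw [if_pos ho, touched ho]
      simp only [rem, rate, Sum.elim_inl]
      rw [((rem_step a c u).1 hc).1]; ring
    · have ho : ¬ L.out i u := by
        rintro (h | h)
        · rw [← hi] at h; exact hc (Sum.inl_injective ((L.e (u+1)).injective h)).symm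
        · rw [← hi] at h; exact absurd ((L.e (u+1)).injective h) (by simp)
      have h3 : (L.e u).symm i = Sum.inl c := by
        rw [Equiv.symm_apply_eq, ← L.inl_ne u c hc, hi]
      rw [if_neg ho, h3]
      simp only [rem, rate, Sum.elim_inl]
      rw [(rem_step a c u).2 hc]; ring
  · have hi : L.e (u+1) (Sum.inr c) = i := by rw [← hx]; simp
    by_cases hc : c = Fin.ofNat b u
    · have ho : L.out i u := Or.inr (by rw [← hc]; exact hi)
      rw [if_pos ho, touched ho]
      simp only [rem, rate, Sum.elim_inr]
      rw [((rem_step b c u).1 hc).1]; ring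
    · have ho : ¬ L.out i u := by
        rintro (h | h)
        · rw [← hi] at h; exact absurd ((L.e (u+1)).injective h) (by simp)
        · rw [← hi] at h; exact hc (Sum.inr_injective ((L.e (u+1)).injective h)).symm
      have h3 : (L.e u).symm i = Sum.inr c := by
        rw [Equiv.symm_apply_eq, ← L.inr_ne u c hc, hi]
      rw [if_neg ho, h3]
      simp only [rem, rate, Sum.elim_inr]
      rw [(rem_step b c u).2 hc]; ring

/-- the output sequence -/
def w (n : ℕ) : ι := if n % 2 = 0 then L.e (n/2+1) (Sum.inl (Fin.ofNat a (n/2)))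
  else L.e (n/2+1) (Sum.inr (Fin.ofNat b (n/2)))

lemma w_even (u : ℕ) : L.w (2*u) = L.e (u+1) (Sum.inl (Fin.ofNat a u)) := by
  simp [w]

lemma w_odd (u : ℕ) : L.w (2*u+1) = L.e (u+1) (Sum.inr (Fin.ofNat b u)) := by
  have h1 : (2*u+1) % 2 = 1 := by omega
  have h2 : (2*u+1) / 2 = u := by omega
  simp [w, h1, h2]

lemma count_even (i : ι) (U : ℕ) : (Nat.count (fun m => L.w m = i) (2*U) : ℝ) =
    2 * r i * U - L.d U i + rem a b U ((L.e U).symm i) - rem a b 0 ((L.e 0).symm i) := by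
  induction U with
  | zero => simp [L.d0]
  | succ U ih =>
    rw [show 2*(U+1) = 2*U+1+1 by ring, Nat.count_succ, Nat.count_succ]
    push_cast
    rw [ih, L.psi_step i U, L.hd U i, L.w_even, L.w_odd]
    have : (if L.out i U then (1:ℝ) else 0) =
      (if L.e (U+1) (Sum.inl (Fin.ofNat a U)) = i then (1:ℝ) else 0)
      + (if L.e (U+1) (Sum.inr (Fin.ofNat b U)) = i then (1:ℝ) else 0) := by
      unfold out
      by_cases h1 : L.e (U+1) (Sum.inl (Fin.ofNat a U)) = i
      · have h2 : ¬ L.e (U+1) (Sum.inr (Fin.ofNat b U)) = i := by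
          intro h2
          exact absurd ((L.e (U+1)).injective (h1.trans h2.symm)) (by simp)
        rw [if_pos (Or.inl h1), if_pos h1, if_neg h2, add_zero]
      · simp only [h1, false_or, if_false, zero_add]
    rw [this]
    simp only [rate]
    ring

lemma w_out (i : ι) (n : ℕ) (h : L.w n = i) : L.out i (n/2) := by
  unfold w at h
  split_ifs at h
  · exact Or.inl h
  · exact Or.inr h

lemma stay_inl (u k : ℕ) (c : Fin a) (h : ∀ v, u ≤ v → v < u + k → c ≠ Fin.ofNat a v) :
    L.e (u+k) (Sum.inl c) = L.e u (Sum.inl c) := by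
  induction k with
  | zero => rfl
  | succ k ih =>
    rw [← add_assoc, L.inl_ne _ _ (h _ (by omega) (by omega))]
    exact ih (fun v h1 h2 => h v h1 (by omega))

lemma stay_inr (u k : ℕ) (c : Fin b) (h : ∀ v, u ≤ v → v < u + k → c ≠ Fin.ofNat b v) :
    L.e (u+k) (Sum.inr c) = L.e u (Sum.inr c) := by
  induction k with
  | zero => rfl
  | succ k ih =>
    rw [← add_assoc, L.inr_ne _ _ (h _ (by omega) (by omega))]
    exact ih (fun v h1 h2 => h v h1 (by omega))

lemma ofNat_ne (a : ℕ) [NeZero a] (u v : ℕ) (h1 : u < v) (h2 : v < u + a) :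
    Fin.ofNat a u ≠ Fin.ofNat a v := by
  intro h
  rw [Fin.ext_iff] at h
  simp only [Fin.val_ofNat] at h
  have h3 : a ∣ v - u := (Nat.modEq_iff_dvd' h1.le).1 h
  have := Nat.le_of_dvd (by omega) h3
  omega

lemma exists_ofNat (a : ℕ) [NeZero a] (u : ℕ) (c : Fin a) :
    ∃ k, k < a ∧ c = Fin.ofNat a (u + k) ∧ ∀ v, u ≤ v → v < u + k → c ≠ Fin.ofNat a v := by
  have ha : 0 < a := Nat.pos_of_ne_zero (NeZero.ne a)
  have ha' : (0:ℤ) < a := by exact_mod_cast ha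
  have h1 := Int.emod_nonneg ((c:ℤ) - u) ha'.ne'
  have h2 := Int.emod_lt_of_pos ((c:ℤ) - u) ha'
  obtain ⟨k, hk⟩ := Int.eq_ofNat_of_zero_le h1
  have hka : k < a := by omega
  have hc : c = Fin.ofNat a (u+k) := by
    rw [← rem_zero_iff]
    push_cast
    rw [← hk, ← sub_sub, Int.sub_emod]
    simp
  refine ⟨k, hka, hc, fun v h3 h4 h5 => ?_⟩
  exact ofNat_ne a v (u+k) h4 (by omega) (h5.symm.trans hc)

lemma out_inl_next (i : ι) (u v : ℕ) (hi : L.e (u+1) (Sum.inl (Fin.ofNat a u)) = i) (huv : u < v)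
    (hv : v < u + a) : ¬ L.out i v := by
  have hs : L.e (v+1) (Sum.inl (Fin.ofNat a u)) = i := by
    have := L.stay_inl (u+1) (v-u) (Fin.ofNat a u) (fun v' h1 h2 => ofNat_ne a u v' (by omega) (by omega))
    rw [show u + 1 + (v-u) = v + 1 by omega] at this
    rw [this, hi]
  rintro (h | h)
  · rw [← hs] at h
    exact ofNat_ne a u v huv hv (Sum.inl_injective ((L.e (v+1)).injective h)).symm
  · rw [← hs] at h; exact absurd ((L.e (v+1)).injective h) (by simp)

lemma out_inr_next (i : ι) (u v : ℕ) (hi : L.e (u+1) (Sum.inr (Fin.ofNat b u)) = i) (huv : u < v)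
    (hv : v < u + b) : ¬ L.out i v := by
  have hs : L.e (v+1) (Sum.inr (Fin.ofNat b u)) = i := by
    have := L.stay_inr (u+1) (v-u) (Fin.ofNat b u) (fun v' h1 h2 => ofNat_ne b u v' (by omega) (by omega))
    rw [show u + 1 + (v-u) = v + 1 by omega] at this
    rw [this, hi]
  rintro (h | h)
  · rw [← hs] at h; exact absurd ((L.e (v+1)).injective h) (by simp)
  · rw [← hs] at h
    exact ofNat_ne b u v huv hv (Sum.inr_injective ((L.e (v+1)).injective h)).symm

lemma gap_min (hab : a ≤ b) (m n : ℕ) (hmn : m < n) (h : L.w m = L.w n) : m + 2*a ≤ n + 1 := by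
  by_contra hcon
  push Not at hcon
  have hle : m/2 ≤ n/2 := Nat.div_le_div_right hmn.le
  rcases hle.eq_or_lt with heq | hlt
  · have h1 : m = 2*(m/2) := by omega
    have h2 : n = 2*(m/2)+1 := by omega
    rw [h1, h2, L.w_even, L.w_odd] at h
    exact absurd ((L.e _).injective h) (by simp)
  · have hout := L.w_out (L.w m) n h.symm
    rcases L.w_out (L.w m) m rfl with h1 | h1
    · exact L.out_inl_next _ _ _ h1 hlt (by omega) hout
    · exact L.out_inr_next _ _ _ h1 hlt (by omega) hout

lemma swap_mem (i : ι) (u : ℕ) (h : L.e u (Sum.inl (Fin.ofNat a u)) = i ∨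
    L.e u (Sum.inr (Fin.ofNat b u)) = i) : L.out i u := by
  unfold out
  rcases L.he u with ⟨_, h2⟩ | ⟨_, h2⟩
  · rw [h2]; simpa using h.symm
  · rw [h2]; exact h

lemma exists_out (hab : a ≤ b) (i : ι) (u : ℕ) : ∃ v, u ≤ v ∧ v < u + b ∧ L.out i v := by
  rcases hx : (L.e u).symm i with c | c
  · have hi : L.e u (Sum.inl c) = i := by rw [← hx]; simp
    obtain ⟨k, hk, hc, hn⟩ := exists_ofNat a u c
    refine ⟨u+k, by omega, by omega, L.swap_mem _ _ (Or.inl ?_)⟩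
    rw [← hc, L.stay_inl u k c hn, hi]
  · have hi : L.e u (Sum.inr c) = i := by rw [← hx]; simp
    obtain ⟨k, hk, hc, hn⟩ := exists_ofNat b u c
    refine ⟨u+k, by omega, by omega, L.swap_mem _ _ (Or.inr ?_)⟩
    rw [← hc, L.stay_inr u k c hn, hi]

lemma gap_max (hab : a ≤ b) (i : ι) (m : ℕ) : ∃ n, m ≤ n ∧ n < m + 2*b + 2 ∧ L.w n = i := by
  obtain ⟨v, h1, h2, h3⟩ := L.exists_out hab i ((m+1)/2)
  rcases h3 with h | h
  · exact ⟨2*v, by omega, by omega, by rw [L.w_even, h]⟩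
  · exact ⟨2*v+1, by omega, by omega, by rw [L.w_odd, h]⟩

end Loop
end QRaux


namespace QRaux
namespace Loop
variable {ι : Type} {a b : ℕ} [NeZero a] [NeZero b] {r : ι → ℝ} (L : Loop ι a b r)

lemma d_step (hr : ∀ i, 0 ≤ r i ∧ 2 * r i ≤ 1) (u : ℕ) (i : ι) : |L.d (u+1) i - L.d u i| ≤ 1 := by
  have h := L.hd u i
  have h2 := rate_bd ((L.e (u+1)).symm i)
  simp only [rate] at h2
  have := hr i
  rw [abs_le]
  constructor <;> linarith

lemma d_bd (hr : ∀ i, 0 ≤ r i ∧ 2 * r i ≤ 1) (u : ℕ) (i : ι) : |L.d u i| ≤ u := by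
  induction u with
  | zero => simp [L.d0]
  | succ u ih =>
    have h := L.d_step hr u i
    rw [abs_le] at *
    push_cast
    constructor <;> linarith

lemma inl_mono (hr : ∀ i, 0 ≤ r i ∧ 2 * r i ≤ 1) (u k : ℕ) (c : Fin a) :
    L.d u (L.e u (Sum.inl c)) - k ≤ L.d (u+k) (L.e (u+k) (Sum.inl c)) := by
  induction k with
  | zero => simp
  | succ k ih =>
    have h1 := L.inl_le (u+k) c
    have h2 := L.d_step hr (u+k) (L.e (u+k+1) (Sum.inl c))
    rw [abs_le] at h2
    rw [← add_assoc]
    push_cast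
    linarith

lemma inr_mono (hr : ∀ i, 0 ≤ r i ∧ 2 * r i ≤ 1) (u k : ℕ) (c : Fin b) :
    L.d (u+k) (L.e (u+k) (Sum.inr c)) ≤ L.d u (L.e u (Sum.inr c)) + k := by
  induction k with
  | zero => simp
  | succ k ih =>
    have h1 := L.inr_le (u+k) c
    have h2 := L.d_step hr (u+k) (L.e (u+k+1) (Sum.inr c))
    rw [abs_le] at h2
    rw [← add_assoc]
    push_cast
    linarith

lemma exists_crt (hc : Nat.Coprime a b) (u : ℕ) (c : Fin a) (v : Fin b) :
    ∃ t, u ≤ t ∧ t < u + a * b ∧ c = Fin.ofNat a t ∧ v = Fin.ofNat b t := by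
  have ha : 0 < a := Nat.pos_of_ne_zero (NeZero.ne a)
  have hb : 0 < b := Nat.pos_of_ne_zero (NeZero.ne b)
  have : NeZero (a*b) := ⟨by positivity⟩
  obtain ⟨x, hx1, hx2⟩ := Nat.chineseRemainder hc c v
  obtain ⟨k, hk, hk2, -⟩ := exists_ofNat (a*b) u (Fin.ofNat (a*b) x)
  rw [Fin.ext_iff] at hk2
  simp only [Fin.val_ofNat] at hk2
  have h3 : x ≡ u + k [MOD (a*b)] := hk2
  refine ⟨u+k, by omega, by omega, ?_, ?_⟩
  · rw [Fin.ext_iff]; simp only [Fin.val_ofNat]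
    have : (c:ℕ) ≡ u+k [MOD a] := hx1.symm.trans (h3.of_mul_right b)
    unfold Nat.ModEq at this
    rwa [Nat.mod_eq_of_lt c.2] at this
  · rw [Fin.ext_iff]; simp only [Fin.val_ofNat]
    have : (v:ℕ) ≡ u+k [MOD b] := hx2.symm.trans (h3.of_mul_left a)
    unfold Nat.ModEq at this
    rwa [Nat.mod_eq_of_lt v.2] at this

lemma approx_sorted (hc : Nat.Coprime a b) (hr : ∀ i, 0 ≤ r i ∧ 2 * r i ≤ 1) (u : ℕ)
    (c : Fin a) (v : Fin b) :
    L.d u (L.e u (Sum.inr v)) ≤ L.d u (L.e u (Sum.inl c)) + 2 * (a*b) := by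
  by_cases hu : u < a * b
  · have h1 := L.d_bd hr u (L.e u (Sum.inr v))
    have h2 := L.d_bd hr u (L.e u (Sum.inl c))
    have h3 : (u:ℝ) ≤ a * b := by exact_mod_cast hu.le
    rw [abs_le] at h1 h2
    linarith
  · push Not at hu
    obtain ⟨t, h1, h2, h3, h4⟩ := exists_crt hc (u - a*b) c v
    obtain ⟨k, rfl⟩ : ∃ k, u = t + 1 + k := ⟨u - t - 1, by omega⟩
    have h5 := L.inl_mono hr (t+1) k c
    have h6 := L.inr_mono hr (t+1) k v
    have h7 := L.sorted t
    rw [← h3, ← h4] at h7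
    have h8 := L.d_step hr t (L.e (t+1) (Sum.inl c))
    have h9 := L.d_step hr t (L.e (t+1) (Sum.inr v))
    rw [abs_le] at h8 h9
    have h10 : (k:ℝ) + 1 ≤ a * b := by
      have : k + 1 ≤ a * b := by omega
      exact_mod_cast this
    linarith

lemma potential [Fintype ι] (hc : Nat.Coprime a b)
    (hr : ∀ i, 1/(b:ℝ) ≤ 2 * r i ∧ 2 * r i ≤ 1/(a:ℝ)) (hs : ∑ i, r i = 1) :
    ∃ C : ℝ, 0 ≤ C ∧ ∀ u i, (L.d u i)^2 ≤ C * u := by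
  have ha : (1:ℝ) ≤ a := by exact_mod_cast Nat.one_le_iff_ne_zero.2 (NeZero.ne a)
  have hb : (1:ℝ) ≤ b := by exact_mod_cast Nat.one_le_iff_ne_zero.2 (NeZero.ne b)
  have ha1 : 1/(a:ℝ) ≤ 1 := by rw [div_le_one (by linarith)]; exact ha
  have hb0 : 0 ≤ 1/(b:ℝ) := by positivity
  have hr' : ∀ i, 0 ≤ r i ∧ 2 * r i ≤ 1 := fun i => ⟨by linarith [(hr i).1], by linarith [(hr i).2]⟩
  set Q : ℝ := 2 * (a*b) + 2 with hQ
  have hQ0 : 0 ≤ Q := by positivity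
  set C : ℝ := 4 * Q + Fintype.card ι with hC
  refine ⟨C, by positivity, ?_⟩
  have main : ∀ u : ℕ, ∑ i, (L.d u i)^2 ≤ C * u := by
    intro u
    induction u with
    | zero => simp [L.d0]
    | succ u ih =>
      set R : ι → ℝ := fun i => rate a b ((L.e (u+1)).symm i) with hR
      have hd : ∀ i, L.d (u+1) i = L.d u i + (2 * r i - R i) := by
        intro i; rw [L.hd]; simp only [hR, rate]; ring
      have hsum0 : ∑ i, (2 * r i - R i) = 0 := by
        rw [Finset.sum_sub_distrib, ← Finset.mul_sum, hs]
        have : ∑ i, R i = ∑ x, rate a b x := by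
          rw [hR]; exact Equiv.sum_comp (L.e (u+1)).symm (rate a b)
        rw [this, Fintype.sum_sum_type]
        simp only [rate, Sum.elim_inl, Sum.elim_inr, Finset.sum_const, Finset.card_univ,
          Fintype.card_fin, nsmul_eq_mul]
        field_simp
        norm_num
      -- minimum over the first loop
      have : Nonempty (Fin a) := ⟨0⟩
      obtain ⟨c0, hc0⟩ := Finite.exists_min (fun c : Fin a => L.d u (L.e (u+1) (Sum.inl c)))
      set m := L.d u (L.e (u+1) (Sum.inl c0)) with hm
      have key : ∀ i, (L.d u i - m) * (2 * r i - R i) ≤ Q * (2 * r i) := by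
        intro i
        rcases hx : (L.e (u+1)).symm i with c | c
        · have hi : L.e (u+1) (Sum.inl c) = i := by rw [← hx]; simp
          have h1 := hc0 c
          rw [hi] at h1
          have h2 : R i = 1/a := by simp only [hR, hx, rate, Sum.elim_inl]
          have h3 := (hr i).2
          have h4 : (L.d u i - m) * (2 * r i - R i) ≤ 0 :=
            mul_nonpos_of_nonneg_of_nonpos (by linarith) (by linarith)
          have h5 : 0 ≤ Q * (2 * r i) := mul_nonneg hQ0 (by linarith [(hr' i).1])
          linarith
        · have hi : L.e (u+1) (Sum.inr c) = i := by rw [← hx]; simp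
          have h2 : R i = 1/b := by simp only [hR, hx, rate, Sum.elim_inr]
          have h3 := (hr i).1
          have h1 := L.approx_sorted hc hr' (u+1) c0 c
          have h8 := L.d_step hr' u (L.e (u+1) (Sum.inl c0))
          have h9 := L.d_step hr' u (L.e (u+1) (Sum.inr c))
          rw [abs_le] at h8 h9
          rw [hi] at h1 h9
          have h10 : L.d u i - m ≤ Q := by rw [hQ]; linarith
          calc (L.d u i - m) * (2 * r i - R i) ≤ Q * (2 * r i - R i) :=
                mul_le_mul_of_nonneg_right h10 (by linarith)
            _ ≤ Q * (2 * r i) := mul_le_mul_of_nonneg_left (by linarith) hQ0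
      have hsq : ∀ i, (2 * r i - R i)^2 ≤ 1 := by
        intro i
        have h1 := rate_bd ((L.e (u+1)).symm i)
        have h2 := hr' i
        have : |2 * r i - R i| ≤ 1 := by
          rw [abs_le]; constructor <;> simp only [hR] <;> linarith
        rw [← sq_abs]
        exact pow_le_one₀ (abs_nonneg _) this
      have e1 : ∑ i, (L.d (u+1) i)^2 = ∑ i, (L.d u i)^2 + 2 * ∑ i, (L.d u i - m) * (2 * r i - R i)
          + 2 * m * ∑ i, (2 * r i - R i) + ∑ i, (2 * r i - R i)^2 := by
        rw [Finset.mul_sum, Finset.mul_sum, ← Finset.sum_add_distrib, ← Finset.sum_add_distrib,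
          ← Finset.sum_add_distrib]
        refine Finset.sum_congr rfl fun i _ => ?_
        rw [hd]; ring
      have e2 : ∑ i, (L.d u i - m) * (2 * r i - R i) ≤ 2 * Q := by
        calc _ ≤ ∑ i, Q * (2 * r i) := Finset.sum_le_sum fun i _ => key i
          _ = 2 * Q := by rw [← Finset.mul_sum, ← Finset.mul_sum, hs]; ring
      have e3 : ∑ i, (2 * r i - R i)^2 ≤ (Fintype.card ι : ℝ) := by
        calc _ ≤ ∑ i : ι, (1:ℝ) := Finset.sum_le_sum fun i _ => hsq i
          _ = _ := by simp
      rw [e1, hsum0]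
      push_cast
      rw [hC] at ih ⊢
      nlinarith
  intro u i
  exact (Finset.single_le_sum (f := fun i => (L.d u i)^2) (fun i _ => sq_nonneg _)
    (Finset.mem_univ i)).trans (main u)

lemma density [Fintype ι] (hc : Nat.Coprime a b)
    (hr : ∀ i, 1/(b:ℝ) ≤ 2 * r i ∧ 2 * r i ≤ 1/(a:ℝ)) (hs : ∑ i, r i = 1) (i : ι) :
    Filter.Tendsto (fun n : ℕ => (Nat.count (fun m => L.w m = i) n : ℝ) / n) Filter.atTop
      (nhds (r i)) := by
  obtain ⟨C, hC, hd⟩ := L.potential hc hr hs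
  have ha : (1:ℝ) ≤ a := by exact_mod_cast Nat.one_le_iff_ne_zero.2 (NeZero.ne a)
  have ha1 : 1/(a:ℝ) ≤ 1 := by rw [div_le_one (by linarith)]; exact ha
  have hb0 : 0 ≤ 1/(b:ℝ) := by positivity
  have hr0 : 0 ≤ r i := by linarith [(hr i).1]
  have hr1 : r i ≤ 1 := by linarith [(hr i).2]
  have bound : ∀ n : ℕ, |(Nat.count (fun m => L.w m = i) n : ℝ) - r i * n| ≤ Real.sqrt (C * n) + 4 := by
    intro n
    have h1 := L.count_even i (n/2)
    have h2 := rem_bd (n/2) ((L.e (n/2)).symm i)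
    have h3 := rem_bd 0 ((L.e 0).symm i)
    have h4 : |L.d (n/2) i| ≤ Real.sqrt (C * n) := by
      apply Real.abs_le_sqrt
      refine (hd _ i).trans (mul_le_mul_of_nonneg_left ?_ hC)
      exact_mod_cast Nat.div_le_self n 2
    have hcase : n = 2*(n/2) ∨ n = 2*(n/2)+1 := by omega
    have h5 : (Nat.count (fun m => L.w m = i) (2*(n/2)) : ℝ) ≤ Nat.count (fun m => L.w m = i) n ∧
      (Nat.count (fun m => L.w m = i) n : ℝ) ≤ Nat.count (fun m => L.w m = i) (2*(n/2)) + 1 := by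
      rcases hcase with h | h
      · rw [← h]; constructor <;> linarith
      · have := Nat.count_succ (fun m => L.w m = i) (2*(n/2))
        rw [← h] at this
        rw [this]
        push_cast
        split_ifs <;> simp
    have h6 : (2 * (n/2 : ℕ) : ℝ) ≤ n ∧ (n:ℝ) ≤ 2 * (n/2 : ℕ) + 1 := by
      constructor
      · exact_mod_cast (by omega : 2 * (n/2) ≤ n)
      · exact_mod_cast (by omega : n ≤ 2 * (n/2) + 1)
    have h7 : r i * (2 * (n/2 : ℕ)) ≤ r i * n := mul_le_mul_of_nonneg_left h6.1 hr0
    have h8 : r i * n ≤ r i * (2 * (n/2 : ℕ)) + 1 := by nlinarith [h6.2]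
    rw [abs_le] at h4 ⊢
    constructor <;> nlinarith
  rw [tendsto_iff_norm_sub_tendsto_zero]
  have lim : Filter.Tendsto (fun n : ℕ => Real.sqrt C * (1 / Real.sqrt n) + 4 * (1 / (n:ℝ))) Filter.atTop (nhds 0) := by
    have t1 : Filter.Tendsto (fun n : ℕ => 1 / Real.sqrt n) Filter.atTop (nhds 0) := by
      simp only [one_div]
      exact tendsto_inv_atTop_zero.comp (Real.tendsto_sqrt_atTop.comp tendsto_natCast_atTop_atTop)
    have t2 : Filter.Tendsto (fun n : ℕ => 1 / (n:ℝ)) Filter.atTop (nhds 0) :=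
      tendsto_one_div_atTop_nhds_zero_nat
    simpa using (t1.const_mul (Real.sqrt C)).add (t2.const_mul 4)
  refine squeeze_zero' (Filter.Eventually.of_forall fun n => norm_nonneg _) ?_ lim
  filter_upwards [Filter.eventually_gt_atTop 0] with n hn
  have hn' : (0:ℝ) < n := by exact_mod_cast hn
  rw [Real.norm_eq_abs]
  have e : (Nat.count (fun m => L.w m = i) n : ℝ) / n - r i
    = ((Nat.count (fun m => L.w m = i) n : ℝ) - r i * n) / n := by field_simp
  rw [e, abs_div, abs_of_pos hn', div_le_iff₀ hn']
  refine (bound n).trans (le_of_eq ?_)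
  rw [Real.sqrt_mul hC]
  have hsn : Real.sqrt n * Real.sqrt n = n := Real.mul_self_sqrt hn'.le
  have hsp : 0 < Real.sqrt n := Real.sqrt_pos.2 hn'
  have : 1 / Real.sqrt n * n = Real.sqrt n := by
    rw [div_mul_eq_mul_div, one_mul, div_eq_iff hsp.ne']; exact hsn.symm
  calc Real.sqrt C * Real.sqrt n + 4 = Real.sqrt C * (1 / Real.sqrt n * n) + 4 * (1/n * n) := by
        rw [this]; field_simp
    _ = _ := by ring

end Loop

/-- Sequences for nearly uniform distributions on finite alphabets. -/
lemma group_lemma {ι : Type} [Fintype ι] (a b : ℕ) (ha : 0 < a) (hab : a ≤ b)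
    (hc : Nat.Coprime a b) (hcard : Fintype.card ι = a + b) (r : ι → ℝ)
    (hr : ∀ i, 1/(b:ℝ) ≤ 2 * r i ∧ 2 * r i ≤ 1/(a:ℝ)) (hs : ∑ i, r i = 1) :
    ∃ w : ℕ → ι, (∀ i, Filter.Tendsto (fun n : ℕ => (Nat.count (fun m => w m = i) n : ℝ) / n)
      Filter.atTop (nhds (r i))) ∧
      (∀ m n, m < n → w m = w n → m + 2*a ≤ n + 1) ∧
      (∀ i m, ∃ n, m ≤ n ∧ n < m + 2*b + 2 ∧ w n = i) := by
  have : NeZero a := ⟨ha.ne'⟩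
  have : NeZero b := ⟨(ha.trans_le hab).ne'⟩
  have e0 : Fin a ⊕ Fin b ≃ ι := Fintype.equivOfCardEq (by simp [hcard])
  obtain ⟨L⟩ := exists_loop r e0
  exact ⟨L.w, L.density hc hr hs, L.gap_min hab, L.gap_max hab⟩

end QRaux


namespace QRaux

noncomputable def chainN (N0 : ℕ → ℕ) (y : ℕ → ℝ) : ℕ → ℕ → ℕ
  | 0 => N0
  | (k+1) => fun n => ⌊y k * chainN N0 y k n⌋₊

lemma chain_lemma (P H : ℕ → ℝ) (hP : ∀ k, 0 ≤ P k) (hsum : HasSum P 1)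
    (hH0 : ∀ k, 0 ≤ H k) (hH : ∀ k, 0 < P k → 1 ≤ P k * H k) (N0 : ℕ → ℕ) (hN00 : N0 0 = 0)
    (hN0 : ∀ n, N0 (n+1) = N0 n ∨ N0 (n+1) = N0 n + 1) :
    ∃ g : ℕ → ℕ → ℕ, (∀ k, g k 0 = 0) ∧
      (∀ n, N0 (n+1) = N0 n → ∀ k, g k (n+1) = g k n) ∧
      (∀ n, N0 (n+1) = N0 n + 1 → ∃ k, g k (n+1) = g k n + 1 ∧ ∀ k', k' ≠ k → g k' (n+1) = g k' n) ∧
      (∀ k n, P k = 0 → g k n = 0) ∧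
      (∀ k n, |(g k n : ℝ) - P k * N0 n| ≤ P k * ∑ i ∈ Finset.range k, H i + 1) := by
  set m : ℕ → ℝ := fun k => 1 - ∑ i ∈ Finset.range k, P i with hm
  have m0 : m 0 = 1 := by simp [hm]
  have msucc : ∀ k, m (k+1) = m k - P k := by
    intro k; simp only [hm, Finset.sum_range_succ]; ring
  have mnn : ∀ k, 0 ≤ m k := by
    intro k
    have := sum_le_hasSum (Finset.range k) (fun i _ => hP i) hsum
    simp only [hm]; linarith
  have mlim : Filter.Tendsto m Filter.atTop (nhds 0) := by
    have := hsum.tendsto_sum_nat.const_sub 1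
    simpa [hm] using this
  set y : ℕ → ℝ := fun k => m (k+1) / m k with hy
  have mle : ∀ k, m (k+1) ≤ m k := fun k => by rw [msucc]; linarith [hP k]
  have ynn : ∀ k, 0 ≤ y k := fun k => div_nonneg (mnn _) (mnn _)
  have yle : ∀ k, y k ≤ 1 := fun k => div_le_one_of_le₀ (mle k) (mnn k)
  have ym : ∀ k, y k * m k = m (k+1) := by
    intro k
    rcases eq_or_ne (m k) 0 with h | h
    · have h1 := mle k
      have h2 := mnn (k+1)
      rw [h, mul_zero]; linarith
    · simp only [hy]; field_simp
  set N : ℕ → ℕ → ℕ := chainN N0 y with hN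
  have Nz : ∀ n, N 0 n = N0 n := fun n => rfl
  have Ns : ∀ k n, N (k+1) n = ⌊y k * N k n⌋₊ := fun k n => rfl
  have Nle : ∀ k n, (N (k+1) n : ℝ) ≤ y k * N k n := fun k n => by
    rw [Ns]; exact Nat.floor_le (mul_nonneg (ynn k) (Nat.cast_nonneg _))
  have Nge : ∀ k n, y k * N k n - 1 ≤ (N (k+1) n : ℝ) := fun k n => by
    rw [Ns]; exact (Nat.sub_one_lt_floor _).le
  have Nmono : ∀ k n, N (k+1) n ≤ N k n := by
    intro k n
    have h1 := Nle k n
    have h2 : y k * N k n ≤ 1 * N k n := mul_le_mul_of_nonneg_right (yle k) (Nat.cast_nonneg _)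
    have : (N (k+1) n : ℝ) ≤ N k n := by linarith
    exact_mod_cast this
  have Nup : ∀ k n, (N k n : ℝ) ≤ m k * N0 n := by
    intro k n
    induction k with
    | zero => rw [Nz, m0, one_mul]
    | succ k ih =>
      calc (N (k+1) n : ℝ) ≤ y k * N k n := Nle k n
        _ ≤ y k * (m k * N0 n) := mul_le_mul_of_nonneg_left ih (ynn k)
        _ = m (k+1) * N0 n := by rw [← mul_assoc, ym]
  have N0' : ∀ k, N k 0 = 0 := by
    intro k
    have h := Nup k 0
    rw [hN00] at h
    simp at h
    exact h
  have Ninc : ∀ k n, N k (n+1) = N k n ∨ N k (n+1) = N k n + 1 := by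
    intro k n
    induction k with
    | zero => exact hN0 n
    | succ k ih =>
      rw [Ns, Ns]
      rcases ih with h | h
      · left; rw [h]
      · have h1 : ⌊y k * N k n⌋₊ ≤ ⌊y k * N k (n+1)⌋₊ := by
          apply Nat.floor_mono
          apply mul_le_mul_of_nonneg_left _ (ynn k)
          exact_mod_cast (by omega : N k n ≤ N k (n+1))
        have h2 : ⌊y k * N k (n+1)⌋₊ ≤ ⌊y k * N k n + 1⌋₊ := by
          apply Nat.floor_mono
          rw [h]; push_cast; linarith [yle k]
        rw [Nat.floor_add_one (mul_nonneg (ynn k) (Nat.cast_nonneg _))] at h2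
        omega
  have Nstay : ∀ k n, N k (n+1) = N k n → N (k+1) (n+1) = N (k+1) n := by
    intro k n h; rw [Ns, Ns, h]
  have Nzero : ∀ k n, P k = 0 → N (k+1) n = N k n := by
    intro k n h
    rcases eq_or_ne (m k) 0 with h0 | h0
    · have h1 := Nup k n
      rw [h0, zero_mul] at h1
      have h2 : N k n = 0 := by exact_mod_cast le_antisymm h1 (Nat.cast_nonneg _)
      have := Nmono k n
      omega
    · have : y k = 1 := by
        simp only [hy]; rw [msucc, h, sub_zero, div_self h0]
      rw [Ns, this, one_mul, Nat.floor_natCast]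
  set E : ℕ → ℝ := fun k => ∑ i ∈ Finset.range k, H i with hE
  have Elow : ∀ k n, m k * N0 n - N k n ≤ m k * E k + 1 := by
    intro k n
    induction k with
    | zero => rw [Nz, m0]; simp [hE]
    | succ k ih =>
      have Es : E (k+1) = E k + H k := Finset.sum_range_succ _ _
      rcases (hP k).eq_or_lt with h | h
      · rw [Nzero k n h.symm, msucc, ← h, sub_zero, Es]
        nlinarith [mnn k, hH0 k]
      · have h1 := Nge k n
        have h2 := mul_le_mul_of_nonneg_left ih (ynn k)
        have h3 : P k ≤ m k := by have := mnn (k+1); rw [msucc] at this; linarith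
        have h4 : 1 ≤ m k * H k := (hH k h).trans (mul_le_mul_of_nonneg_right h3 (hH0 k))
        have h5 : y k ≤ m (k+1) * H k := by
          simp only [hy]
          rw [div_le_iff₀ (by linarith)]
          nlinarith [mnn (k+1)]
        have h6 : y k * (m k * N0 n - N k n) = m (k+1) * N0 n - y k * N k n := by
          rw [← ym]; ring
        have h7 : y k * (m k * E k + 1) = m (k+1) * E k + y k := by rw [← ym]; ring
        rw [Es]
        linarith
  refine ⟨fun k n => N k n - N (k+1) n, ?_, ?_, ?_, ?_, ?_⟩
  · intro k; simp [N0']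
  · intro n h k
    have : ∀ k, N k (n+1) = N k n := by
      intro k
      induction k with
      | zero => exact h
      | succ k ih => exact Nstay k n ih
    simp only [this]
  · intro n h
    have hex : ∃ k, N k (n+1) = N k n := by
      have : ∀ᶠ k in Filter.atTop, m k < 1 / (N0 (n+1) + 1 : ℝ) :=
        mlim.eventually (gt_mem_nhds (by positivity))
      obtain ⟨k, hk⟩ := this.exists
      refine ⟨k, ?_⟩
      have h1 := Nup k (n+1)
      rw [lt_div_iff₀ (by positivity)] at hk
      have h3 : (N k (n+1) : ℝ) < 1 := by
        have := mnn k
        nlinarith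
      have h4 : N k (n+1) < 1 := by exact_mod_cast h3
      have := Ninc k n
      omega
    have hfs := Nat.find_spec hex
    have hfm := fun k => @Nat.find_min _ _ hex k
    have hpos : Nat.find hex ≠ 0 := by
      intro h0
      rw [h0] at hfs
      change N0 (n+1) = N0 n at hfs
      omega
    obtain ⟨k, hk⟩ := Nat.exists_eq_succ_of_ne_zero hpos
    rw [hk] at hfs hfm
    have after : ∀ j, N (k + 1 + j) (n+1) = N (k+1+j) n := by
      intro j
      induction j with
      | zero => exact hfs
      | succ j ih => exact Nstay _ _ ih
    have before : ∀ j, j ≤ k → N j (n+1) = N j n + 1 := by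
      intro j hj
      have h1 := hfm j (Nat.lt_succ_of_le hj)
      have := Ninc j n
      tauto
    refine ⟨k, ?_, ?_⟩
    · have h1 := before k le_rfl
      have h2 := after 0
      have h3 := Nmono k n
      simp only [add_zero] at h2
      simp only
      omega
    · intro k' hk'
      simp only
      rcases lt_or_gt_of_ne hk' with h1 | h1
      · rw [before k' (by omega), before (k'+1) (by omega)]; omega
      · obtain ⟨j, rfl⟩ := Nat.exists_eq_add_of_lt h1
        have h2 := after j
        have h3 := after (j+1)
        rw [show k + j + 1 = k + 1 + j by ring, show k + 1 + j + 1 = k + 1 + (j+1) by ring, h2, h3]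
  · intro k n h
    simp only
    rw [Nzero k n h]; omega
  · intro k n
    simp only
    rw [Nat.cast_sub (Nmono k n)]
    have h1 := Nle k n
    have h2 := Nge k n
    have hy1 : 0 ≤ 1 - y k := by linarith [yle k]
    have h3 := mul_le_mul_of_nonneg_left (Nup k n) hy1
    have h4 := mul_le_mul_of_nonneg_left (Elow k n) hy1
    have e : (1 - y k) * m k = P k := by rw [sub_mul, ym, msucc]; ring
    have e3 : (1 - y k) * (m k * N0 n) = P k * N0 n := by rw [← mul_assoc, e]
    have e4 : (1 - y k) * (m k * E k + 1) = P k * E k + (1 - y k) := by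
      rw [mul_add, ← mul_assoc, e, mul_one]
    have e5 : (1 - y k) * (m k * N0 n - N k n) = P k * N0 n - (1 - y k) * N k n := by
      rw [mul_sub, ← mul_assoc, e]
    have hEn : 0 ≤ P k * E k := mul_nonneg (hP k) (Finset.sum_nonneg fun i _ => hH0 i)
    have := ynn k
    rw [abs_le]
    constructor <;> linarith

end QRaux


namespace QRaux

lemma sum_inv_sq (R : ℕ) : ∑ n ∈ Finset.range R, 1 / ((n:ℝ)+1)^2 ≤ 2 := by
  have h : ∀ R : ℕ, ∑ n ∈ Finset.range (R+1), 1 / ((n:ℝ)+1)^2 ≤ 2 - 1/((R:ℝ)+1) := by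
    intro R
    induction R with
    | zero => norm_num
    | succ R ih =>
      rw [Finset.sum_range_succ]
      have : 1 / (((R+1:ℕ):ℝ)+1)^2 ≤ 1/((R:ℝ)+1) - 1/(((R+1:ℕ):ℝ)+1) := by
        push_cast
        rw [div_sub_div _ _ (by positivity) (by positivity), div_le_div_iff₀ (by positivity) (by positivity)]
        have : (0:ℝ) ≤ R := Nat.cast_nonneg _
        nlinarith
      linarith
  have h1 := h R
  rw [Finset.sum_range_succ] at h1
  have h2 : 0 ≤ 1 / ((R:ℝ)+1)^2 := by positivity
  have h3 : 0 ≤ 1 / ((R:ℝ)+1) := by positivity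
  linarith

noncomputable def leftPos {β : Type} (ρ : β → ℕ) (q : β → ℝ) (K : ℕ) (σ : β) : ℕ → ℕ := fun j =>
  if h : ∃ x : ℕ, (((j:ℝ)+1)/q σ ≤ x ∧ (x:ℝ) < (j+1+1/(K:ℝ))/q σ) ∧
    ∀ σ', (_ : ρ σ' < ρ σ) → ∀ j', leftPos ρ q K σ' j' ≠ x then h.choose else 0
termination_by ρ σ

lemma left_lemma {β : Type} (ρ : β → ℕ) (hρ : Function.Injective ρ) (q : β → ℝ) (hq : ∀ σ, 0 < q σ)
    (K : ℕ) (hK : 1 ≤ K) (hb : ∀ σ, q σ ≤ 1 / (8 * K) * (1 / ((ρ σ : ℝ)+1)^2)) :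
    ∃ pos : β → ℕ → ℕ, (∀ σ (j : ℕ), ((j:ℝ)+1)/q σ ≤ pos σ j ∧ (pos σ j:ℝ) < (j+1+1/(K:ℝ))/q σ) ∧
      ∀ σ σ' j j', pos σ j = pos σ' j' → σ = σ' := by
  have hK' : (1:ℝ) ≤ K := by exact_mod_cast hK
  set pos := leftPos ρ q K with hpos
  have hκ : 1/(K:ℝ) ≤ 1 := by rw [div_le_one (by linarith)]; exact hK'
  have hκ0 : 0 < 1/(K:ℝ) := by positivity
  have hex : ∀ N σ, ρ σ = N → ∀ j : ℕ, ∃ x : ℕ, (((j:ℝ)+1)/q σ ≤ x ∧ (x:ℝ) < (j+1+1/(K:ℝ))/q σ) ∧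
    ∀ σ', (_ : ρ σ' < ρ σ) → ∀ j', pos σ' j' ≠ x := by
    intro N
    induction N using Nat.strong_induction_on with
    | _ N ih =>
    intro σ hσ j
    have hwin : ∀ σ', ρ σ' < ρ σ → ∀ j : ℕ, ((j:ℝ)+1)/q σ' ≤ pos σ' j ∧ (pos σ' j:ℝ) < (j+1+1/(K:ℝ))/q σ' := by
      intro σ' h' j
      have h := ih (ρ σ') (hσ ▸ h') σ' rfl j
      rw [hpos, leftPos]
      rw [hpos] at h
      rw [dif_pos h]
      exact h.choose_spec.1
    have hfin : {σ' | ρ σ' < ρ σ}.Finite :=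
      Set.Finite.preimage hρ.injOn (Set.finite_Iio (ρ σ))
    set T := hfin.toFinset with hT
    have hTm : ∀ σ', σ' ∈ T ↔ ρ σ' < ρ σ := fun σ' => by simp [hT]
    set x0 : ℝ := ((j:ℝ)+1)/q σ with hx0
    set W : ℝ := (1/(K:ℝ))/q σ with hW
    have hx0n : 0 ≤ x0 := by have := hq σ; positivity
    have hWp : 0 < W := div_pos hκ0 (hq σ)
    have hend : (j+1+1/(K:ℝ))/q σ = x0 + W := by rw [hx0, hW]; ring
    set A := Finset.Ico ⌈x0⌉₊ ⌈x0 + W⌉₊ with hA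
    set J : β → Finset ℕ := fun σ' => Finset.Ico ⌈x0 * q σ' - 2⌉₊ ⌈(x0 + W) * q σ'⌉₊ with hJ
    set Bad := T.biUnion (fun σ' => (J σ').image (pos σ')) with hBad
    have hJc : ∀ σ', ((J σ').card : ℝ) ≤ W * q σ' + 3 := by
      intro σ'
      have h1 := Nat.ceil_lt_add_one (mul_nonneg (add_nonneg hx0n hWp.le) (hq σ').le)
      have h2 := Nat.le_ceil (x0 * q σ' - 2)
      simp only [hJ, Nat.card_Ico]
      have h3 : (x0 * q σ') ≤ (x0 + W) * q σ' := mul_le_mul_of_nonneg_right (by linarith) (hq σ').le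
      rw [Nat.cast_sub (Nat.ceil_mono (by linarith))]
      nlinarith
    have hρT : T.card ≤ ρ σ := by
      calc T.card = (T.image ρ).card := (Finset.card_image_of_injective _ hρ).symm
        _ ≤ (Finset.range (ρ σ)).card := Finset.card_le_card (by
            intro x hx
            obtain ⟨σ', h1, rfl⟩ := Finset.mem_image.1 hx
            exact Finset.mem_range.2 ((hTm _).1 h1))
        _ = ρ σ := Finset.card_range _
    have hqsum : ∑ σ' ∈ T, q σ' ≤ 1/4 := by
      calc ∑ σ' ∈ T, q σ' ≤ ∑ σ' ∈ T, 1 / (8 * (K:ℝ)) * (1 / ((ρ σ' : ℝ)+1)^2) :=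
            Finset.sum_le_sum fun σ' _ => hb σ'
        _ = 1 / (8 * (K:ℝ)) * ∑ n ∈ T.image ρ, (1 / ((n : ℝ)+1)^2) := by
            rw [Finset.sum_image hρ.injOn, Finset.mul_sum]
        _ ≤ 1 / (8 * (K:ℝ)) * ∑ n ∈ Finset.range (ρ σ), (1 / ((n : ℝ)+1)^2) := by
            apply mul_le_mul_of_nonneg_left _ (by positivity)
            apply Finset.sum_le_sum_of_subset_of_nonneg
            · intro x hx
              obtain ⟨σ', h1, rfl⟩ := Finset.mem_image.1 hx
              exact Finset.mem_range.2 ((hTm _).1 h1)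
            · intros; positivity
        _ ≤ 1 / (8 * (K:ℝ)) * 2 := mul_le_mul_of_nonneg_left (sum_inv_sq _) (by positivity)
        _ ≤ 1/4 := by
            rw [div_mul_eq_mul_div, div_le_div_iff₀ (by positivity) (by norm_num)]; linarith
    have hBc : (Bad.card : ℝ) ≤ W / 4 + 3 * ρ σ := by
      calc (Bad.card : ℝ) ≤ ∑ σ' ∈ T, ((J σ').card : ℝ) := by
            have : Bad.card ≤ ∑ σ' ∈ T, (J σ').card :=
              Finset.card_biUnion_le.trans (Finset.sum_le_sum fun σ' _ => Finset.card_image_le)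
            exact_mod_cast this
        _ ≤ ∑ σ' ∈ T, (W * q σ' + 3) := Finset.sum_le_sum fun σ' _ => hJc σ'
        _ = W * ∑ σ' ∈ T, q σ' + 3 * T.card := by
            rw [Finset.sum_add_distrib, Finset.mul_sum]; simp; ring
        _ ≤ W * (1/4) + 3 * ρ σ := by
            have : (T.card:ℝ) ≤ ρ σ := by exact_mod_cast hρT
            have := mul_le_mul_of_nonneg_left hqsum hWp.le
            linarith
        _ = _ := by ring
    have hAc : W - 1 ≤ (A.card : ℝ) := by
      simp only [hA, Nat.card_Ico]
      rw [Nat.cast_sub (Nat.ceil_mono (by linarith))]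
      have h1 := Nat.ceil_lt_add_one hx0n
      have h2 := Nat.le_ceil (x0 + W)
      linarith
    have hWbig : 8 * ((ρ σ : ℝ) + 1) ≤ W := by
      have h1 := hb σ
      have h2 : 8 * ((ρ σ : ℝ) + 1)^2 ≤ W := by
        rw [hW, le_div_iff₀ (hq σ)]
        calc 8 * ((ρ σ : ℝ) + 1)^2 * q σ ≤ 8 * ((ρ σ : ℝ) + 1)^2 * (1 / (8 * K) * (1 / ((ρ σ : ℝ)+1)^2)) :=
              mul_le_mul_of_nonneg_left h1 (by positivity)
          _ = 1 / K := by field_simp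
      have h3 : (0:ℝ) ≤ ρ σ := Nat.cast_nonneg _
      nlinarith
    have hcard : Bad.card < A.card := by
      have h3 : (0:ℝ) ≤ ρ σ := Nat.cast_nonneg _
      have : (Bad.card : ℝ) < A.card := by linarith
      exact_mod_cast this
    obtain ⟨x, hxA, hxB⟩ := Finset.exists_mem_notMem_of_card_lt_card hcard
    rw [hA, Finset.mem_Ico, Nat.ceil_le, Nat.lt_ceil] at hxA
    refine ⟨x, ⟨hxA.1, by rw [hend]; exact hxA.2⟩, fun σ' h' j' heq => hxB ?_⟩
    rw [hBad, Finset.mem_biUnion]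
    refine ⟨σ', (hTm _).2 h', Finset.mem_image.2 ⟨j', ?_, heq⟩⟩
    have hw := hwin σ' h' j'
    rw [heq, div_le_iff₀ (hq σ'), lt_div_iff₀ (hq σ')] at hw
    have h1 : x0 * q σ' ≤ x * q σ' := mul_le_mul_of_nonneg_right hxA.1 (hq σ').le
    have h2 : x * q σ' < (x0 + W) * q σ' := mul_lt_mul_of_pos_right hxA.2 (hq σ')
    rw [hJ, Finset.mem_Ico, Nat.ceil_le, Nat.lt_ceil]
    constructor <;> linarith
  have hspec : ∀ σ (j : ℕ), (((j:ℝ)+1)/q σ ≤ pos σ j ∧ (pos σ j:ℝ) < (j+1+1/(K:ℝ))/q σ) ∧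
      ∀ σ', (_ : ρ σ' < ρ σ) → ∀ j', pos σ' j' ≠ pos σ j := by
    intro σ j
    have h := hex (ρ σ) σ rfl j
    have e : pos σ j = h.choose := by
      conv_lhs => rw [hpos, leftPos]
      rw [hpos] at h
      rw [dif_pos h]
    rw [e]
    exact h.choose_spec
  refine ⟨pos, fun σ j => (hspec σ j).1, ?_⟩
  intro σ σ' j j' heq
  by_contra hne
  rcases lt_or_gt_of_ne (fun h => hne (hρ h)) with h | h
  · exact (hspec σ' j').2 σ h j heq
  · exact (hspec σ j).2 σ' h j' heq.symm

lemma left_seq {α : Type} (s : ℕ → α) (σ : α) (x : ℕ → ℕ) (hs : ∀ n, s n = σ ↔ ∃ j, x j = n)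
    (p κ : ℝ) (hp : 0 < p) (hκ : κ ≤ 1)
    (hx : ∀ j : ℕ, ((j:ℝ)+1)/p ≤ x j ∧ (x j:ℝ) < (j+1+κ)/p) :
    (∀ n : ℕ, (Nat.count (fun m => s m = σ) n : ℝ) ≤ n * p ∧
      n * p - 2 ≤ (Nat.count (fun m => s m = σ) n : ℝ)) ∧
    (∀ m n, m < n → s m = σ → s n = σ → (1 - κ)/p ≤ (n:ℝ) - m) ∧
    (∀ k n : ℕ, (∀ i, k < i → i < k + n → s i ≠ σ) → (n:ℝ) ≤ (1+κ)/p) := by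
  have hmono : StrictMono x := by
    apply strictMono_nat_of_lt_succ
    intro j
    have h1 := (hx j).2
    have h2 := (hx (j+1)).1
    have h3 : (j+1+κ)/p ≤ (((j+1:ℕ):ℝ)+1)/p := by
      apply div_le_div_of_nonneg_right _ hp.le
      push_cast; linarith
    have : (x j : ℝ) < x (j+1) := by linarith
    exact_mod_cast this
  refine ⟨?_, ?_, ?_⟩
  · intro n
    have hnp : 0 ≤ n * p := by positivity
    rw [Nat.count_eq_card_filter_range]
    constructor
    · have hsub : (Finset.range n).filter (fun m => s m = σ) ⊆ (Finset.range ⌊n*p⌋₊).image x := by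
        intro i hi
        rw [Finset.mem_filter, Finset.mem_range] at hi
        obtain ⟨j, rfl⟩ := (hs i).1 hi.2
        refine Finset.mem_image.2 ⟨j, ?_, rfl⟩
        rw [Finset.mem_range]
        apply Nat.lt_of_succ_le
        rw [Nat.le_floor_iff hnp]
        have h1 := (hx j).1
        rw [div_le_iff₀ hp] at h1
        have h2 : (x j : ℝ) ≤ n := by exact_mod_cast hi.1.le
        push_cast
        nlinarith
      have h1 := Finset.card_le_card hsub
      have h2 := h1.trans Finset.card_image_le
      rw [Finset.card_range] at h2
      have h3 := Nat.floor_le hnp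
      have h4 : ((((Finset.range n).filter (fun m => s m = σ)).card : ℕ) : ℝ) ≤ ⌊n*p⌋₊ := by exact_mod_cast h2
      linarith
    · have hsub : (Finset.range (⌊n*p⌋₊ - 1)).image x ⊆ (Finset.range n).filter (fun m => s m = σ) := by
        intro i hi
        obtain ⟨j, hj, rfl⟩ := Finset.mem_image.1 hi
        rw [Finset.mem_range] at hj
        rw [Finset.mem_filter, Finset.mem_range]
        refine ⟨?_, (hs _).2 ⟨j, rfl⟩⟩
        have h1 := (hx j).2
        have h2 : j + 2 ≤ ⌊n*p⌋₊ := by omega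
        rw [Nat.le_floor_iff hnp] at h2
        push_cast at h2
        rw [lt_div_iff₀ hp] at h1
        have : (x j : ℝ) < n := by
          have : (x j:ℝ) * p < n * p := by linarith
          exact lt_of_mul_lt_mul_right this hp.le
        exact_mod_cast this
      have h1 := Finset.card_le_card hsub
      rw [Finset.card_image_of_injective _ hmono.injective, Finset.card_range] at h1
      have h3 := Nat.lt_floor_add_one (n*p)
      have h4 : ⌊n*p⌋₊ ≤ ((Finset.range n).filter (fun m => s m = σ)).card + 1 := by omega
      have h5 : (⌊n*p⌋₊ : ℝ) ≤ (((Finset.range n).filter (fun m => s m = σ)).card : ℝ) + 1 := by exact_mod_cast h4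
      linarith
  · intro m n hmn h1 h2
    obtain ⟨j, rfl⟩ := (hs m).1 h1
    obtain ⟨j', rfl⟩ := (hs n).1 h2
    have hj : j < j' := hmono.lt_iff_lt.1 hmn
    have h3 := (hx j).2
    have h4 := (hx j').1
    have h5 : ((j:ℝ)+1) ≤ j' := by exact_mod_cast hj
    have h6 : (1 - κ)/p + (j+1+κ)/p ≤ ((j':ℝ)+1)/p := by
      rw [← add_div]; apply div_le_div_of_nonneg_right _ hp.le; linarith
    linarith
  · intro k n h
    by_contra hcon
    push Not at hcon
    have hkp : 0 ≤ k * p := by positivity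
    have h1 := Nat.floor_le hkp
    have h2 := Nat.lt_floor_add_one (k*p)
    have h3 := hx ⌊k*p⌋₊
    rw [div_le_iff₀ hp, lt_div_iff₀ hp] at h3
    rw [div_lt_iff₀ hp] at hcon
    refine h (x ⌊k*p⌋₊) ?_ ?_ ((hs _).2 ⟨_, rfl⟩)
    · have : (k:ℝ) < x ⌊k*p⌋₊ := lt_of_mul_lt_mul_right (by linarith : (k:ℝ) * p < x ⌊k*p⌋₊ * p) hp.le
      exact_mod_cast this
    · have : (x ⌊k*p⌋₊ : ℝ) < k + n := by
        refine lt_of_mul_lt_mul_right (a := p) ?_ hp.le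
        linarith
      exact_mod_cast this

end QRaux


namespace QRaux

lemma qr_wrap {α : Type} (s : ℕ → α) (σ : α) (Xmin Xmax ε : ℝ) (hX : 0 < Xmin) (hε : 0 < ε)
    (h1 : ∀ m n, m < n → s m = σ → s n = σ → Xmin ≤ (n:ℝ) - m)
    (h2 : ∀ k n : ℕ, (∀ i, k < i → i < k + n → s i ≠ σ) → (n:ℝ) ≤ Xmax)
    (h3 : Xmax ≤ (1+ε) * Xmin) : QRchar s σ ≤ ENNReal.ofReal (1+ε) := by
  have hM : MaxGap s σ ≤ ENNReal.ofReal Xmax := by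
    apply sSup_le
    rintro _ ⟨n, ⟨-, k, hk⟩, rfl⟩
    have := h2 k n hk
    show (n:ℝ≥0∞) ≤ _
    rw [← ENNReal.ofReal_natCast]
    exact ENNReal.ofReal_le_ofReal this
  have hm : ENNReal.ofReal Xmin ≤ MinGap s σ := by
    apply le_sInf
    rintro _ ⟨n, ⟨hn, k, hk, hk'⟩, rfl⟩
    have := h1 k (k+n) (by omega) hk hk'
    show _ ≤ (n:ℝ≥0∞)
    rw [← ENNReal.ofReal_natCast]
    apply ENNReal.ofReal_le_ofReal
    push_cast at this
    linarith
  have hne : MaxGap s σ ≠ ⊤ := (hM.trans_lt ENNReal.ofReal_lt_top).ne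
  unfold QRchar
  rw [if_neg (fun h => hne h.1)]
  apply ENNReal.div_le_of_le_mul
  calc MaxGap s σ ≤ ENNReal.ofReal Xmax := hM
    _ ≤ ENNReal.ofReal ((1+ε) * Xmin) := ENNReal.ofReal_le_ofReal h3
    _ = ENNReal.ofReal (1+ε) * ENNReal.ofReal Xmin := ENNReal.ofReal_mul (by linarith)
    _ ≤ _ := by gcongr

lemma qr_none {α : Type} (s : ℕ → α) (σ : α) (h : ∀ n, s n ≠ σ) : QRchar s σ = 1 := by
  have hM : MaxGap s σ = ⊤ := by
    unfold MaxGap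
    rw [sSup_eq_top]
    intro b hb
    obtain ⟨n, hn⟩ := ENNReal.exists_nat_gt hb.ne
    refine ⟨((n+1:ℕ):ℝ≥0∞), ⟨n+1, ⟨by omega, 0, fun i _ _ => h i⟩, rfl⟩, hn.trans ?_⟩
    exact_mod_cast Nat.lt_succ_self n
  have hm : MinGap s σ = ⊤ := by
    unfold MinGap
    have : {n | 1 ≤ n ∧ ∃ k : ℕ, s k = σ ∧ s (k + n) = σ} = ∅ := by
      ext n; simp [h]
    rw [this]; simp
  simp [QRchar, hM, hm]

lemma ncard_count {α : Type} (s : ℕ → α) (σ : α) (n : ℕ) :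
    {i : ℕ | i < n ∧ s i = σ}.ncard = Nat.count (fun m => s m = σ) n := by
  rw [Nat.count_eq_card_filter_range, ← Set.ncard_coe_finset]
  congr 1
  ext i; simp

lemma assemble {α : Type} [Nonempty α] (L : Set α) (x : α → ℕ → ℕ)
    (hx : ∀ σ ∈ L, ∀ σ' ∈ L, ∀ j j', x σ j = x σ' j' → σ = σ')
    (Big : ℕ → Finset α) (hBL : ∀ k, ∀ σ ∈ Big k, σ ∉ L)
    (hBB : ∀ k k' σ, σ ∈ Big k → σ ∈ Big k' → k = k')
    (w : ℕ → ℕ → α) (hw : ∀ k, (Big k).Nonempty → ∀ m, w k m ∈ Big k)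
    (N0 : ℕ → ℕ) (hN0 : ∀ n, N0 (n+1) = N0 n + if (∃ σ ∈ L, ∃ j, x σ j = n) then 0 else 1)
    (g : ℕ → ℕ → ℕ)
    (hg0 : ∀ n, N0 (n+1) = N0 n → ∀ k, g k (n+1) = g k n)
    (hg1 : ∀ n, N0 (n+1) = N0 n + 1 → ∃ k, g k (n+1) = g k n + 1 ∧ ∀ k', k' ≠ k → g k' (n+1) = g k' n)
    (hgP : ∀ k, ¬ (Big k).Nonempty → ∀ n, g k n = 0) :
    ∃ s : ℕ → α, (∀ σ ∈ L, ∀ n, s n = σ ↔ ∃ j, x σ j = n) ∧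
      (∀ k, ∀ σ ∈ Big k, ∀ n, s n = σ ↔ (g k (n+1) = g k n + 1 ∧ w k (g k n) = σ)) ∧
      (∀ σ, σ ∉ L → (∀ k, σ ∉ Big k) → ∀ n, s n ≠ σ) := by
  have key : ∀ n, ∃ y : α, (∀ σ ∈ L, y = σ ↔ ∃ j, x σ j = n) ∧
      (∀ k, ∀ σ ∈ Big k, y = σ ↔ (g k (n+1) = g k n + 1 ∧ w k (g k n) = σ)) ∧
      (∀ σ, σ ∉ L → (∀ k, σ ∉ Big k) → y ≠ σ) := by
    intro n
    have hn := hN0 n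
    by_cases hB : ∃ σ ∈ L, ∃ j, x σ j = n
    · rw [if_pos hB] at hn
      have h0 := hg0 n hn
      obtain ⟨y, hy, j, hj⟩ := hB
      refine ⟨y, fun σ hσ => ⟨?_, ?_⟩, fun k σ hσ => ⟨?_, ?_⟩, ?_⟩
      · rintro rfl; exact ⟨j, hj⟩
      · rintro ⟨j', hj'⟩; exact hx _ hy _ hσ j j' (by rw [hj, hj'])
      · rintro rfl; exact absurd hy (hBL k _ hσ)
      · rintro ⟨h, -⟩; rw [h0] at h; omega
      · rintro σ hσ - rfl; exact hσ hy
    · rw [if_neg hB] at hn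
      obtain ⟨k0, hk0, hk0'⟩ := hg1 n hn
      have hne : (Big k0).Nonempty := by
        by_contra h
        have h1 := hgP k0 h (n+1)
        omega
      refine ⟨w k0 (g k0 n), fun σ hσ => ⟨?_, ?_⟩, fun k σ hσ => ⟨?_, ?_⟩, ?_⟩
      · rintro rfl; exact absurd hσ (hBL k0 _ (hw k0 hne _))
      · intro h; exact absurd ⟨σ, hσ, h⟩ hB
      · intro h
        have : k = k0 := hBB _ _ σ hσ (h ▸ hw k0 hne _)
        subst this
        exact ⟨hk0, h⟩
      · rintro ⟨h, h'⟩
        have : k = k0 := by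
          by_contra hk
          have := hk0' k hk
          omega
        subst this
        exact h'
      · intro σ _ h h'
        exact h k0 (h' ▸ hw k0 hne _)
  choose s h1 h2 h3 using key
  exact ⟨s, fun σ hσ n => h1 n σ hσ, fun k σ hσ n => h2 n k σ hσ, fun σ hσ hk n => h3 n σ hσ hk⟩

lemma mono_step (g : ℕ → ℕ) (hg : ∀ n, g (n+1) = g n ∨ g (n+1) = g n + 1) : Monotone g :=
  monotone_nat_of_le_succ fun n => by rcases hg n with h | h <;> omega

lemma time_change {α : Type} (s : ℕ → α) (σ : α) (g : ℕ → ℕ) (hg0 : g 0 = 0)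
    (hg : ∀ n, g (n+1) = g n ∨ g (n+1) = g n + 1) (w : ℕ → α)
    (hs : ∀ n, s n = σ ↔ (g (n+1) = g n + 1 ∧ w (g n) = σ))
    (N0 : ℕ → ℕ) (P S Z r K : ℝ) (hP : 0 < P) (hS : 0 ≤ S) (hZ : 0 < Z) 
    (hN1 : ∀ n L : ℕ, (N0 (n+L) : ℝ) - N0 n ≤ L)
    (hN2 : ∀ n L : ℕ, (L:ℝ) - L/K - 1 ≤ (N0 (n+L) : ℝ) - N0 n)
    (hNZ : Filter.Tendsto (fun n : ℕ => (N0 n : ℝ)/n) Filter.atTop (nhds Z))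
    (hgN : ∀ n, |(g n : ℝ) - P * N0 n| ≤ P * S + 1)
    (a b : ℕ)
    (hwd : Filter.Tendsto (fun n:ℕ => (Nat.count (fun m => w m = σ) n:ℝ)/n) Filter.atTop (nhds r))
    (hwa : ∀ m n, m < n → w m = w n → m+2*a ≤ n+1)
    (hwb : ∀ m, ∃ n, m ≤ n ∧ n < m+2*b+2 ∧ w n = σ) :
    Filter.Tendsto (fun n:ℕ => (Nat.count (fun m => s m = σ) n:ℝ)/n) Filter.atTop (nhds (r * (P * Z))) ∧
    (∀ m n, m < n → s m = σ → s n = σ → (2*a-3)/P - 2*S ≤ (n:ℝ) - m) ∧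
    (∀ k n : ℕ, (∀ i, k < i → i < k + n → s i ≠ σ) → 1 ≤ n → 
      ((n:ℝ)-1) * (1 - 1/K) ≤ 1 + (2*b+3)/P + 2*S) := by
  have hmono := mono_step g hg
  refine ⟨?_, ?_, ?_⟩
  · have hcount : ∀ n, Nat.count (fun m => s m = σ) n = Nat.count (fun m => w m = σ) (g n) := by
      intro n
      induction n with
      | zero => simp [hg0]
      | succ n ih =>
        rw [Nat.count_succ, ih]
        rcases hg n with h | h
        · rw [if_neg (by rw [hs]; omega), h]; rfl
        · rw [h, Nat.count_succ]
          congr 1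
          by_cases hh : w (g n) = σ
          · rw [if_pos ((hs n).2 ⟨h, hh⟩), if_pos hh]
          · rw [if_neg (fun h' => hh ((hs n).1 h').2), if_neg hh]
    have hgd : Filter.Tendsto (fun n : ℕ => (g n : ℝ)/n) Filter.atTop (nhds (P*Z)) := by
      have h1 : Filter.Tendsto (fun n : ℕ => P * ((N0 n : ℝ)/n)) Filter.atTop (nhds (P*Z)) := hNZ.const_mul P
      have h2 : Filter.Tendsto (fun n : ℕ => ((g n : ℝ) - P * N0 n)/n) Filter.atTop (nhds 0) := by
        apply squeeze_zero_norm (a := fun n : ℕ => (P*S+1)/(n:ℝ))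
        · intro n
          rw [norm_div, Real.norm_natCast]
          gcongr
          exact hgN n
        · exact tendsto_const_div_atTop_nhds_zero_nat _
      have h3 := h1.add h2
      rw [add_zero] at h3
      refine h3.congr fun n => ?_
      ring
    have hginf : Filter.Tendsto g Filter.atTop Filter.atTop := by
      have : Filter.Tendsto (fun n : ℕ => (g n : ℝ)) Filter.atTop Filter.atTop := by
        have h := Filter.Tendsto.pos_mul_atTop (mul_pos hP hZ) hgd tendsto_natCast_atTop_atTop
        refine h.congr' ?_
        filter_upwards [Filter.eventually_gt_atTop 0] with n hn
        have : (n:ℝ) ≠ 0 := by positivity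
        field_simp
      exact tendsto_natCast_atTop_iff.1 this
    have h := (hwd.comp hginf).mul hgd
    refine h.congr' ?_
    filter_upwards [hginf.eventually_gt_atTop 0] with n hn
    have : (g n:ℝ) ≠ 0 := by positivity
    simp only [Function.comp, hcount]
    field_simp
  · intro m n hmn hm hn
    have hm' := (hs m).1 hm
    have hn' := (hs n).1 hn
    have h1 : g (m+1) ≤ g n := hmono hmn
    have h2 := hwa (g m) (g n) (by omega) (by rw [hm'.2, hn'.2])
    have h3 := hN1 m (n-m)
    rw [show m + (n-m) = n by omega, Nat.cast_sub hmn.le] at h3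
    have h4 := abs_le.1 (hgN m)
    have h5 := abs_le.1 (hgN n)
    have h6 : (g m:ℝ) + 2*a ≤ g n + 1 := by exact_mod_cast h2
    have h7 : P * ((N0 n:ℝ) - N0 m) ≤ P * (n - m) := by gcongr
    rw [sub_le_iff_le_add, div_le_iff₀ hP]
    nlinarith
  · intro k n hk hn
    obtain ⟨t, ht1, ht2, ht3⟩ := hwb (g (k+1))
    have h1 : g (k+n) ≤ t := by
      by_contra hcon
      push Not at hcon
      have : ∀ l, l ≤ n - 1 → g (k+1+l) ≤ t := by
        intro l
        induction l with
        | zero => intro _; simpa using ht1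
        | succ l ih =>
          intro hl
          have ih := ih (by omega)
          rw [← add_assoc]
          rcases hg (k+1+l) with h | h
          · omega
          · by_contra h'
            have e : g (k+1+l) = t := by omega
            exact hk (k+1+l) (by omega) (by omega) ((hs _).2 ⟨h, by rw [e]; exact ht3⟩)
      have := this (n-1) le_rfl
      rw [show k+1+(n-1) = k+n by omega] at this
      omega
    have h2 : g (k+n) ≤ g (k+1) + 2*b + 1 := by omega
    have h2' : (g (k+n):ℝ) ≤ g (k+1) + 2*b + 1 := by exact_mod_cast h2
    have h3 := hN2 (k+1) (n-1)
    rw [show k+1+(n-1) = k+n by omega, Nat.cast_sub hn, Nat.cast_one] at h3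
    have h4 := abs_le.1 (hgN (k+1))
    have h5 := abs_le.1 (hgN (k+n))
    have h7 := mul_le_mul_of_nonneg_left h3 hP.le
    have h8 : ((n:ℝ)-1) * (1 - 1/K) = (n - 1) - (n-1)/K := by ring
    rw [h8]
    have h9 : P * ((2*b+3)/P) = 2*b+3 := by field_simp
    refine le_of_mul_le_mul_left ?_ hP
    nlinarith

lemma count_dvd (K : ℕ) (hK : 1 ≤ K) (n : ℕ) :
    n ≤ K * Nat.count (fun i => K ∣ i) n ∧ K * Nat.count (fun i => K ∣ i) n + 1 ≤ n + K := by
  induction n with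
  | zero => simp; omega
  | succ n ih =>
    rw [Nat.count_succ]
    by_cases h : K ∣ n
    · rw [if_pos h]
      obtain ⟨m, rfl⟩ := h
      set c := Nat.count (fun i => K ∣ i) (K*m)
      have : c = m := by
        apply le_antisymm
        · by_contra hc
          have : m + 1 ≤ c := by omega
          have := Nat.mul_le_mul_left K this
          rw [Nat.mul_add] at this
          omega
        · exact Nat.le_of_mul_le_mul_left ih.1 (by omega)
      rw [this, Nat.mul_add]; omega
    · rw [if_neg h, add_zero]
      set c := Nat.count (fun i => K ∣ i) n
      have : n ≠ K * c := fun h' => h ⟨c, h'⟩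
      omega

lemma N0_bounds (K : ℕ) (hK : 1 ≤ K) (B : ℕ → Prop) (hB : ∀ n, B n → K ∣ n) (n L : ℕ) :
    (Nat.count (fun i => ¬ B i) (n+L) : ℝ) - Nat.count (fun i => ¬ B i) n ≤ L ∧
    (L:ℝ) - L/K - 1 ≤ (Nat.count (fun i => ¬ B i) (n+L) : ℝ) - Nat.count (fun i => ¬ B i) n := by
  have hK0 : (0:ℝ) < K := by exact_mod_cast hK
  have h : ∀ L, Nat.count (fun i => ¬ B i) (n+L) ≤ Nat.count (fun i => ¬ B i) n + L ∧
    L + Nat.count (fun i => ¬ B i) n + Nat.count (fun i => K ∣ i) n ≤ Nat.count (fun i => ¬ B i) (n+L)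
      + Nat.count (fun i => K ∣ i) (n+L) := by
    intro L
    induction L with
    | zero => simp
    | succ L ih =>
      rw [← add_assoc, Nat.count_succ, Nat.count_succ]
      have := hB (n+L)
      by_cases h1 : B (n+L)
      · simp only [h1, this h1, not_true, if_true, if_false]; omega
      · simp only [h1, not_false_eq_true, if_true]
        split_ifs <;> omega
  obtain ⟨h1, h2⟩ := h L
  have h3 := (count_dvd K hK n).1
  have h4 := (count_dvd K hK (n+L)).2
  have h1' : (Nat.count (fun i => ¬ B i) (n+L) : ℝ) ≤ Nat.count (fun i => ¬ B i) n + L := by exact_mod_cast h1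
  have h2' : (L:ℝ) + Nat.count (fun i => ¬ B i) n + Nat.count (fun i => K ∣ i) n ≤ Nat.count (fun i => ¬ B i) (n+L)
      + Nat.count (fun i => K ∣ i) (n+L) := by exact_mod_cast h2
  have h3' : (n:ℝ) ≤ K * Nat.count (fun i => K ∣ i) n := by exact_mod_cast h3
  have h4' : (K:ℝ) * Nat.count (fun i => K ∣ i) (n+L) + 1 ≤ n + L + K := by exact_mod_cast h4
  refine ⟨by linarith, ?_⟩
  have h5 : (Nat.count (fun i => K ∣ i) (n+L) : ℝ) - Nat.count (fun i => K ∣ i) n ≤ L/K + 1 := by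
    rw [div_add_one hK0.ne', le_div_iff₀ hK0]
    nlinarith
  linarith

lemma count_not (B : ℕ → Prop) (n : ℕ) :
    Nat.count (fun i => ¬ B i) n + Nat.count B n = n := by
  induction n with
  | zero => simp
  | succ n ih => rw [Nat.count_succ, Nat.count_succ]; split_ifs <;> omega

lemma union_density {β : Type} (A : β → ℕ → Prop) (hA : ∀ σ σ' n, A σ n → A σ' n → σ = σ')
    (p : β → ℝ) (hp : Summable p) 
    (hc : ∀ σ n, (Nat.count (A σ) n : ℝ) ≤ n * p σ ∧ n * p σ - 2 ≤ Nat.count (A σ) n) :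
    Filter.Tendsto (fun n : ℕ => (Nat.count (fun i => ¬ ∃ σ, A σ i) n : ℝ)/n) Filter.atTop
      (nhds (1 - ∑' σ, p σ)) := by
  have hsum : ∀ n, HasSum (fun σ => (Nat.count (A σ) n : ℝ)) (Nat.count (fun i => ∃ σ, A σ i) n : ℝ) := by
    intro n
    induction n with
    | zero => simp
    | succ n ih =>
      simp only [Nat.count_succ]
      push_cast
      apply ih.add
      by_cases h : ∃ σ, A σ n
      · rw [if_pos h]
        obtain ⟨σ0, h0⟩ := h
        have : (fun σ => if A σ n then (1:ℝ) else 0) = fun σ => if σ = σ0 then 1 else 0 := by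
          ext σ
          by_cases hh : A σ n
          · rw [if_pos hh, if_pos (hA _ _ _ hh h0)]
          · rw [if_neg hh, if_neg (by rintro rfl; exact hh h0)]
        rw [this]
        exact hasSum_ite_eq σ0 1
      · rw [if_neg h]
        have : (fun σ => if A σ n then (1:ℝ) else 0) = fun _ => 0 := by
          ext σ
          rw [if_neg (fun hh => h ⟨σ, hh⟩)]
        rw [this]; exact hasSum_zero
  have hp0 : ∀ σ, 0 ≤ p σ := by
    intro σ
    have := (hc σ 1).1
    have h2 : (0:ℝ) ≤ Nat.count (A σ) 1 := Nat.cast_nonneg _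
    simp only [Nat.cast_one, one_mul] at this
    linarith
  have hlim : Filter.Tendsto (fun n : ℕ => ∑' σ, (Nat.count (A σ) n : ℝ)/n) Filter.atTop (nhds (∑' σ, p σ)) := by
    apply tendsto_tsum_of_dominated_convergence hp
    · intro σ
      have h1 : Filter.Tendsto (fun n : ℕ => p σ - 2/(n:ℝ)) Filter.atTop (nhds (p σ)) := by
        simpa using (tendsto_const_nhds (x := p σ)).sub (tendsto_const_div_atTop_nhds_zero_nat 2)
      apply tendsto_of_tendsto_of_tendsto_of_le_of_le' h1 tendsto_const_nhds
      · filter_upwards [Filter.eventually_gt_atTop 0] with n hn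
        have hn' : (0:ℝ) < n := by exact_mod_cast hn
        rw [le_div_iff₀ hn', sub_mul, div_mul_cancel₀ _ hn'.ne']
        linarith [(hc σ n).2]
      · filter_upwards [Filter.eventually_gt_atTop 0] with n hn
        have hn' : (0:ℝ) < n := by exact_mod_cast hn
        rw [div_le_iff₀ hn']
        linarith [(hc σ n).1]
    · filter_upwards [Filter.eventually_gt_atTop 0] with n hn
      intro σ
      have hn' : (0:ℝ) < n := by exact_mod_cast hn
      rw [Real.norm_of_nonneg (by positivity), div_le_iff₀ hn']
      linarith [(hc σ n).1]
  have h2 := (tendsto_const_nhds (x := (1:ℝ))).sub hlim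
  refine h2.congr' ?_
  filter_upwards [Filter.eventually_gt_atTop 0] with n hn
  have hn' : (n:ℝ) ≠ 0 := by positivity
  rw [((hsum n).div_const (n:ℝ)).tsum_eq]
  have h3 : (Nat.count (fun i => ¬ ∃ σ, A σ i) n : ℝ) + Nat.count (fun i => ∃ σ, A σ i) n = n := by
    exact_mod_cast count_not (fun i => ∃ σ, A σ i) n
  field_simp
  linarith

end QRaux


namespace QRaux

lemma big_numeric (K q : ℕ) (hK : 16 ≤ K) (hq : K ≤ q) (ε P S Λ : ℝ) (hε : 12/(K:ℝ) ≤ ε)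
    (hP : 0 < P) (hP1 : P ≤ 1) (hS : S ≤ 2*Λ/(K:ℝ)^2)
    (hΛ : Λ ≤ 2*((2*K^2+K)*q+1 : ℕ)/P) :
    ∃ Xmax : ℝ, 0 < (2*(K^2*q : ℕ)-3)/P - 2*S ∧ Xmax ≤ (1+ε)*((2*(K^2*q : ℕ)-3)/P - 2*S) ∧
      ∀ n : ℕ, ((n:ℝ)-1) * (1 - 1/(K:ℝ)) ≤ 1 + (2*(K*(K+1)*q+1 : ℕ)+3)/P + 2*S → (n:ℝ) ≤ Xmax := by
  have hK' : (16:ℝ) ≤ K := by exact_mod_cast hK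
  have hq' : (K:ℝ) ≤ q := by exact_mod_cast hq
  have hK0 : (0:ℝ) < K := by linarith
  push_cast at *
  set t : ℝ := 1/(K:ℝ) with ht
  have htK : t * K = 1 := by rw [ht]; field_simp
  have ht0 : 0 < t := by positivity
  have ht1 : t ≤ 1/16 := by rw [ht]; gcongr
  set X : ℝ := 2*(K^2*q)/P with hX
  have hX0 : 0 < X := by
    have : 0 < (q:ℝ) := by linarith
    positivity
  have hXP : X * P = 2*(K^2*q) := by rw [hX]; field_simp
  have hq16 : (16:ℝ) ≤ q := by linarith
  have hKK : (256:ℝ) ≤ K*q := by nlinarith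
  -- 1 ≤ X t
  have hbig : 5 / P ≤ t * X := by
    rw [div_le_iff₀ hP, mul_assoc, hXP]
    have : t * (2*(K^2*q)) = 2*(K*q) := by
      calc t * (2*(K^2*q)) = (t*K) * (2*(K*q)) := by ring
        _ = _ := by rw [htK, one_mul]
    rw [this]; linarith
  have h1 : 1 ≤ 5/P := by rw [le_div_iff₀ hP]; linarith
  have h3 : 3/P ≤ 5/P := by gcongr; norm_num
  have hΛX : Λ ≤ 4 * X := by
    refine hΛ.trans ?_
    rw [hX, mul_div_assoc', div_le_div_iff_of_pos_right hP]
    have : (K:ℝ)*q ≤ K^2*q/16 := by nlinarith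
    nlinarith
  have hS2 : 2*S ≤ t*X := by
    have e1 : 2*Λ/(K:ℝ)^2 = 2*Λ*t^2 := by rw [ht]; field_simp
    rw [e1] at hS
    have e2 : 2*Λ*t^2 ≤ 2*(4*X)*t^2 := by gcongr
    have e3 : 16*X*t^2 ≤ t*X := by nlinarith [mul_pos ht0 hX0]
    linarith
  have hmin : X*(1-2*t) ≤ (2*(K^2*q)-3)/P - 2*S := by
    have : (2*((K:ℝ)^2*q)-3)/P = X - 3/P := by rw [hX]; ring
    rw [this]; linarith
  have hε' : 12*t ≤ ε := by rw [ht]; linarith [hε, show 12*(1/(K:ℝ)) = 12/K by ring]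
  refine ⟨X*(1+7*t), ?_, ?_, ?_⟩
  · refine lt_of_lt_of_le ?_ hmin
    apply mul_pos hX0; linarith
  · have : (1+ε)*(X*(1-2*t)) ≤ (1+ε)*((2*(K^2*q)-3)/P - 2*S) := by
      apply mul_le_mul_of_nonneg_left hmin; linarith
    refine le_trans ?_ this
    have : (1+12*t)*(X*(1-2*t)) ≤ (1+ε)*(X*(1-2*t)) := by
      apply mul_le_mul_of_nonneg_right (by linarith)
      apply mul_nonneg hX0.le; linarith
    refine le_trans ?_ this
    have : X * (1+7*t) ≤ X * ((1+12*t)*(1-2*t)) := by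
      apply mul_le_mul_of_nonneg_left _ hX0.le
      nlinarith
    linarith
  · intro n hn
    have e : (2*((K:ℝ)*(K+1)*q+1)+3)/P = X + t*X + 5/P := by
      have : t * X = 2*(K*q)/P := by
        rw [hX, ht]; field_simp
      rw [this, hX]; ring
    rw [e] at hn
    have h4 : ((n:ℝ)-1)*(1-t) ≤ X*(1+4*t) := by linarith
    have h5 : X*(1+4*t) ≤ X*(1+6*t)*(1-t) := by
      rw [mul_assoc]
      apply mul_le_mul_of_nonneg_left _ hX0.le
      nlinarith
    have h6 : ((n:ℝ)-1) ≤ X*(1+6*t) := le_of_mul_le_mul_right (h4.trans h5) (by linarith)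
    linarith

noncomputable def lam (K : ℕ) : ℝ := (2*K+1)/(2*K+2)

lemma lam_pos (K : ℕ) : 0 < lam K := by unfold lam; positivity
lemma lam_lt (K : ℕ) : lam K < 1 := by
  unfold lam; rw [div_lt_one (by positivity)]; linarith

lemma H_sum (K : ℕ) (hK : 1 ≤ K) (k : ℕ) :
    ∑ i ∈ Finset.range k, ((lam K)^(i+1))⁻¹ / (((2*K^2+K)*K+1 : ℕ):ℝ) ≤ 2 * ((lam K)^k)⁻¹ / (K:ℝ)^2 := by
  have hK0 : (1:ℝ) ≤ K := by exact_mod_cast hK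
  have hl := lam_pos K
  have h : ∑ i ∈ Finset.range k, ((lam K)^(i+1))⁻¹ ≤ (2*K+2) * ((lam K)^k)⁻¹ := by
    induction k with
    | zero => simp; linarith
    | succ k ih =>
      rw [Finset.sum_range_succ]
      have e : ((lam K)^k)⁻¹ = lam K * ((lam K)^(k+1))⁻¹ := by
        rw [pow_succ]; field_simp
      have e2 : (2*K+2) * lam K = 2*K+1 := by unfold lam; field_simp
      rw [e] at ih
      have : (2*(K:ℝ)+2) * (lam K * ((lam K)^(k+1))⁻¹) = (2*K+1) * ((lam K)^(k+1))⁻¹ := by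
        rw [← mul_assoc, e2]
      linarith
  rw [← Finset.sum_div]
  push_cast
  rw [div_le_div_iff₀ (by positivity) (by positivity)]
  have hp : 0 < ((lam K)^k)⁻¹ := by positivity
  calc _ ≤ ((2*K+2) * ((lam K)^k)⁻¹) * (K:ℝ)^2 := by gcongr
    _ = ((lam K)^k)⁻¹ * ((2*K+2) * (K:ℝ)^2) := by ring
    _ ≤ ((lam K)^k)⁻¹ * (2*((2*K^2+K)*K+1)) := by
      apply mul_le_mul_of_nonneg_left _ hp.le
      nlinarith [pow_pos (show (0:ℝ) < K by linarith) 3, mul_nonneg (sq_nonneg (K:ℝ)) (sub_nonneg.2 hK0)]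
    _ = _ := by ring

lemma big_group {α : Type} (F : Finset α) (K q k : ℕ) (hK : 1 ≤ K) (hq : 1 ≤ q)
    (hF : F.card = (2*K^2+K)*q+1) (p : α → ℝ)
    (hp : ∀ σ ∈ F, (lam K)^(k+1) < p σ ∧ p σ ≤ (lam K)^k) :
    ∃ w : ℕ → α, (∀ m, w m ∈ F) ∧
      (∀ σ ∈ F, Filter.Tendsto (fun n:ℕ => (Nat.count (fun m => w m = σ) n:ℝ)/n) Filter.atTop
        (nhds (p σ / ∑ τ ∈ F, p τ))) ∧
      (∀ m n, m < n → w m = w n → m+2*(K^2*q) ≤ n+1) ∧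
      (∀ σ ∈ F, ∀ m, ∃ n, m ≤ n ∧ n < m+2*(K*(K+1)*q+1)+2 ∧ w n = σ) := by
  have hK0 : (1:ℝ) ≤ K := by exact_mod_cast hK
  have hq0 : (1:ℝ) ≤ q := by exact_mod_cast hq
  have hl := lam_pos K
  set P := ∑ τ ∈ F, p τ with hPd
  set M : ℝ := (2*K^2+K)*q+1 with hM
  have hM0 : 0 < M := by positivity
  have hMc : ((F.card:ℕ):ℝ) = M := by rw [hF, hM]; push_cast; ring
  have hlk : 0 < (lam K)^k := by positivity
  have hP1 : P ≤ M * (lam K)^k := by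
    rw [hPd, ← hMc, ← nsmul_eq_mul]
    exact Finset.sum_le_card_nsmul _ _ _ fun σ hσ => (hp σ hσ).2
  have hP2 : M * (lam K)^(k+1) ≤ P := by
    rw [hPd, ← hMc, ← nsmul_eq_mul]
    exact Finset.card_nsmul_le_sum _ _ _ fun σ hσ => (hp σ hσ).1.le
  have hP0 : 0 < P := lt_of_lt_of_le (by positivity) hP2
  have hl2 : (2*K+2) * lam K = 2*K+1 := by unfold lam; field_simp
  obtain ⟨w, hw1, hw2, hw3⟩ := group_lemma (ι := F) (K^2*q) (K*(K+1)*q+1) (by positivity) (by nlinarith) (by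
      rw [← Nat.isCoprime_iff_coprime]
      push_cast
      apply IsCoprime.mul_left
      · apply IsCoprime.pow_left
        exact ⟨-((K+1)*q), 1, by ring⟩
      · exact ⟨-(K*(K+1)), 1, by ring⟩) (by
      rw [Fintype.card_coe, hF]; ring) (fun σ => p σ / P) (by
      rintro ⟨σ, hσ⟩
      obtain ⟨h1, h2⟩ := hp σ hσ
      have hpσ : 0 ≤ p σ := (pow_pos hl (k+1)).le.trans h1.le
      push_cast
      rw [mul_div_assoc']
      constructor
      · rw [div_le_div_iff₀ (by positivity) hP0, one_mul]
        have e1 : M ≤ 2 * lam K * (K*(K+1)*q+1) := by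
          have : 2 * lam K * ((K:ℝ)*(K+1)*q+1) = (2*K+1)*(K*q) + 2*lam K := by
            rw [← hl2]; ring
          have h3 : 1 ≤ 2*lam K := by nlinarith
          rw [this, hM]
          nlinarith
        calc P ≤ M * (lam K)^k := hP1
          _ ≤ (2 * lam K * (K*(K+1)*q+1)) * (lam K)^k := by gcongr
          _ = 2 * (lam K)^(k+1) * (K*(K+1)*q+1) := by ring
          _ ≤ _ := by gcongr
      · rw [div_le_div_iff₀ hP0 (by positivity), one_mul]
        have e1 : 2 * ((K:ℝ)^2*q) ≤ M * lam K := by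
          have hh : (2*K+2) * (2 * ((K:ℝ)^2*q)) ≤ (2*K+2) * (M * lam K) := by
            have : (2*K+2) * (M * lam K) = M * (2*K+1) := by rw [← hl2]; ring
            rw [this, hM]
            have : (0:ℝ) ≤ K*q := by positivity
            nlinarith
          exact le_of_mul_le_mul_left hh (by positivity)
        calc 2 * p σ * ((K:ℝ)^2*q) = (2 * ((K:ℝ)^2*q)) * p σ := by ring
          _ ≤ (M * lam K) * (lam K)^k := by gcongr
          _ = M * (lam K)^(k+1) := by ring
          _ ≤ P := hP2) (by
      rw [← Finset.sum_div, Finset.sum_coe_sort F p]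
      exact div_self hP0.ne')
  refine ⟨fun m => w m, fun m => (w m).2, ?_, ?_, ?_⟩
  · intro σ hσ
    have := hw1 ⟨σ, hσ⟩
    simpa only [Subtype.ext_iff] using this
  · intro m n hmn h
    exact hw2 m n hmn (Subtype.ext h)
  · intro σ hσ m
    obtain ⟨n, h1, h2, h3⟩ := hw3 ⟨σ, hσ⟩ m
    exact ⟨n, h1, h2, congrArg Subtype.val h3⟩

lemma class_split {α : Type} (C : Finset α) (K : ℕ) (hK : 1 ≤ K) :
    ∃ (F : Finset α) (q : ℕ), F ⊆ C ∧ (F.Nonempty → K ≤ q ∧ F.card = (2*K^2+K)*q+1) ∧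
      (C \ F).card ≤ (2*K^2+K)*K+1 := by
  by_cases h : C.card < (2*K^2+K)*K+1
  · exact ⟨∅, 0, by simp, by simp, by simpa using h.le⟩
  · push Not at h
    set c := 2*K^2+K with hc
    have hc0 : 0 < c := by positivity
    have h1 : c * ((C.card-1)/c) ≤ C.card - 1 := Nat.mul_div_le _ _
    obtain ⟨F, hF, hFc⟩ := Finset.exists_subset_card_eq (s := C) (n := c*((C.card-1)/c)+1) (by omega)
    refine ⟨F, (C.card-1)/c, hF, fun _ => ⟨?_, hFc⟩, ?_⟩
    · rw [Nat.le_div_iff_mul_le hc0, mul_comm]; omega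
    · rw [Finset.card_sdiff_of_subset hF, hFc]
      have := Nat.lt_mul_div_succ (C.card-1) hc0
      rw [Nat.mul_add] at this
      have : c ≤ c * K := Nat.le_mul_of_pos_right _ hK
      omega

lemma index_exists {α : Type} (F : Finset α) (T : ℕ) (h : F.card ≤ T) :
    ∃ e : α → ℕ, (∀ σ ∈ F, ∀ σ' ∈ F, e σ = e σ' → σ = σ') ∧ ∀ σ ∈ F, e σ < T := by
  refine ⟨fun σ => if hσ : σ ∈ F then (F.equivFin ⟨σ, hσ⟩ : ℕ) else 0, ?_, ?_⟩
  · intro σ hσ σ' hσ' he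
    simp only [dif_pos hσ, dif_pos hσ'] at he
    have := F.equivFin.injective (Fin.ext he)
    simpa using this
  · intro σ hσ
    simp only [dif_pos hσ]
    exact lt_of_lt_of_le (Fin.isLt _) h

lemma k0_exists (K T : ℕ) (hK : 1 ≤ K) (hT : 1 ≤ T) : ∃ k0 : ℕ, ∀ k, k0 ≤ k →
    K * (lam K)^k ≤ 1/(8*K) * (1 / ((T:ℝ)*(k+1))^2) := by
  have hl := lam_pos K
  have hK0 : (0:ℝ) < K := by exact_mod_cast hK
  have hT0 : (0:ℝ) < T := by exact_mod_cast hT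
  have h := tendsto_pow_const_mul_const_pow_of_abs_lt_one 2 (r := lam K) (by rw [abs_of_pos hl]; exact lam_lt K)
  have h' := h.eventually (gt_mem_nhds (show (0:ℝ) < lam K/(8*K*K*T^2) by positivity))
  obtain ⟨k0, hk0⟩ := Filter.eventually_atTop.1 h'
  refine ⟨k0, fun k hk => ?_⟩
  have := hk0 (k+1) (by omega)
  rw [lt_div_iff₀ (by positivity)] at this
  rw [div_mul_div_comm, one_mul, le_div_iff₀ (by positivity)]
  push_cast at this
  have e : ((k:ℝ)+1)^2 * lam K^(k+1) * (8*K*K*T^2) = lam K * (K * lam K^k * (8*K*((T:ℝ)*(k+1))^2)) := by ring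
  rw [e] at this
  have := lt_of_mul_lt_mul_left (this.trans_eq (mul_one _).symm) hl.le
  exact this.le

end QRaux


namespace QRaux

set_option maxHeartbeats 2000000 in
lemma main_build (K : ℕ) (hK : 16 ≤ K) (ε : ℝ) (hε : 12/(K:ℝ) ≤ ε) (k0 : ℕ)
    (hk0 : ∀ k, k0 ≤ k →
      K * (lam K)^k ≤ 1/(8*K) * (1 / ((((2*K^2+K)*K+1 : ℕ):ℝ)*(k+1))^2))
    (α : Type) (p : α → ℝ) (hp0 : ∀ σ, 0 ≤ p σ) (hp : HasSum p 1) (hpl : ∀ σ, p σ < (lam K)^k0) :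
    ∃ s : ℕ → α, HasDensity s p ∧ QR s ≤ ENNReal.ofReal (1 + ε) := by
  have hKR : (16:ℝ) ≤ K := by exact_mod_cast hK
  have hKpos : (0:ℝ) < K := by linarith
  have hε0 : 0 < ε := lt_of_lt_of_le (by positivity) hε
  have hl := lam_pos K
  have hl1 := lam_lt K
  have hne : Nonempty α := by
    by_contra h
    rw [not_nonempty_iff] at h
    have := hp.unique (hasSum_empty (f := p))
    norm_num at this
  set T := (2*K^2+K)*K+1 with hT
  have hp1 : ∀ σ, p σ ≤ 1 := fun σ => le_hasSum hp σ fun j _ => hp0 j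
  -- classes
  have hcl : ∀ σ, ∃ k : ℕ, 0 < p σ → (lam K)^(k+1) < p σ ∧ p σ ≤ (lam K)^k := by
    intro σ
    by_cases h : 0 < p σ
    · obtain ⟨n, hn⟩ := exists_nat_pow_near_of_lt_one h (hp1 σ) hl hl1
      exact ⟨n, fun _ => hn⟩
    · exact ⟨0, fun h' => absurd h' h⟩
  choose kc hkc using hcl
  have hkc0 : ∀ σ, 0 < p σ → k0 ≤ kc σ := by
    intro σ h
    have h1 := (hkc σ h).1.trans (hpl σ)
    have := (pow_lt_pow_iff_right_of_lt_one₀ hl hl1).1 h1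
    omega
  have hfin : ∀ k, {σ | 0 < p σ ∧ kc σ = k}.Finite := by
    intro k
    have h := hp.summable.tendsto_cofinite_zero.eventually (gt_mem_nhds (show (0:ℝ) < (lam K)^(k+1) by positivity))
    rw [Filter.eventually_cofinite] at h
    refine h.subset ?_
    rintro σ ⟨h1, rfl⟩
    simpa using (hkc σ h1).1.le
  have hsplit := fun k => class_split (hfin k).toFinset K (by omega)
  choose Big q hBsub hBcard hLcard using hsplit
  have hBmem : ∀ k σ, σ ∈ Big k → 0 < p σ ∧ kc σ = k := by
    intro k σ h
    have := hBsub k h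
    simpa using this
  have hidx := fun k => index_exists _ _ (hLcard k)
  choose e he1 he2 using hidx
  set L : Set α := {σ | 0 < p σ ∧ σ ∉ Big (kc σ)} with hL
  have hLmem : ∀ σ ∈ L, σ ∈ (hfin (kc σ)).toFinset \ Big (kc σ) := by
    intro σ hσ
    rw [Finset.mem_sdiff]
    exact ⟨by simpa using hσ.1, hσ.2⟩
  set ρ : L → ℕ := fun σ => T * kc σ + e (kc σ) σ with hρ
  have hρlt : ∀ σ : L, ρ σ + 1 ≤ T * (kc σ + 1) := by
    intro σ
    have := he2 (kc σ) σ (hLmem σ σ.2)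
    simp only [hρ, Nat.mul_add]
    omega
  have hρinj : Function.Injective ρ := by
    intro σ σ' h
    have h1 : e (kc σ) σ < T := he2 (kc σ) σ (hLmem σ σ.2)
    have h2 : e (kc (σ':α)) σ' < T := he2 (kc σ') σ' (hLmem σ' σ'.2)
    have hT0 : 0 < T := by omega
    simp only [hρ] at h
    have hk : kc σ = kc (σ':α) := by
      have e1 := congrArg (· / T) h
      simpa [Nat.mul_add_div hT0, Nat.div_eq_of_lt h1, Nat.div_eq_of_lt h2] using e1
    rw [hk] at h
    apply Subtype.ext
    refine he1 (kc σ') σ (hk ▸ hLmem σ σ.2) σ' (hLmem σ' σ'.2) ?_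
    omega
  have hqb : ∀ σ : L, K * p σ ≤ 1 / (8 * K) * (1 / ((ρ σ : ℝ)+1)^2) := by
    intro σ
    have h1 : K * p σ ≤ K * (lam K)^(kc σ) := by
      have := (hkc σ σ.2.1).2
      gcongr
    refine h1.trans ((hk0 _ (hkc0 σ σ.2.1)).trans ?_)
    have h2 : (ρ σ:ℝ) + 1 ≤ (T:ℝ) * (kc σ + 1) := by exact_mod_cast hρlt σ
    gcongr
  obtain ⟨pos, hpos, hposinj⟩ := left_lemma ρ hρinj (fun σ : L => K * p σ)
    (fun σ => mul_pos hKpos σ.2.1) K (by omega) hqb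
  set x : α → ℕ → ℕ := fun σ j => if h : σ ∈ L then K * pos ⟨σ, h⟩ j else 0 with hxdef
  have hxL : ∀ σ (h : σ ∈ L) j, x σ j = K * pos ⟨σ, h⟩ j := by
    intro σ h j; simp only [hxdef, dif_pos h]
  have hxinj : ∀ σ ∈ L, ∀ σ' ∈ L, ∀ j j', x σ j = x σ' j' → σ = σ' := by
    intro σ h σ' h' j j' hj
    rw [hxL σ h, hxL σ' h'] at hj
    have := hposinj _ _ _ _ (Nat.eq_of_mul_eq_mul_left (by omega) hj)
    simpa using this
  have hxb : ∀ σ ∈ L, ∀ j : ℕ, ((j:ℝ)+1)/p σ ≤ x σ j ∧ (x σ j:ℝ) < (j+1+1/(K:ℝ))/p σ := by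
    intro σ h j
    have hpσ : 0 < p σ := h.1
    obtain ⟨h1, h2⟩ := hpos ⟨σ, h⟩ j
    rw [hxL σ h]
    push_cast
    rw [div_le_iff₀ (mul_pos hKpos hpσ)] at h1
    rw [lt_div_iff₀ (mul_pos hKpos hpσ)] at h2
    rw [div_le_iff₀ hpσ, lt_div_iff₀ hpσ]
    constructor <;> linarith
  have hκ1 : 1/(K:ℝ) ≤ 1 := by rw [div_le_one hKpos]; linarith
  -- leftover mass
  set η := ∑' σ : L, p σ with hη
  have hη1 : η ≤ 1/2 := by
    apply Real.tsum_le_of_sum_le (f := fun σ : L => p σ) (fun σ => hp0 σ)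
    intro u
    have h1 : ∀ σ ∈ u, p σ ≤ 1/8 * (1 / ((ρ σ : ℝ)+1)^2) := by
      intro σ _
      have h := hqb σ
      have h2 : p σ ≤ K * p σ := le_mul_of_one_le_left (hp0 _) (by linarith)
      refine (h2.trans h).trans ?_
      gcongr
      linarith
    refine (Finset.sum_le_sum h1).trans ?_
    rw [← Finset.mul_sum]
    have h2 : ∑ σ ∈ u, 1 / ((ρ σ : ℝ)+1)^2 = ∑ n ∈ u.image ρ, 1/((n:ℝ)+1)^2 := by
      rw [Finset.sum_image hρinj.injOn]
    have h3 : ∑ n ∈ u.image ρ, 1/((n:ℝ)+1)^2 ≤ ∑ n ∈ Finset.range ((u.image ρ).sup id + 1), 1/((n:ℝ)+1)^2 := by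
      apply Finset.sum_le_sum_of_subset_of_nonneg
      · intro n hn
        rw [Finset.mem_range]
        have := Finset.le_sup (f := id) hn
        simp only [id] at this
        exact Nat.lt_succ_of_le this
      · intros; positivity
    rw [h2]
    linarith [sum_inv_sq ((u.image ρ).sup id + 1)]
  set Z := 1 - η with hZ
  have hη0 : 0 ≤ η := tsum_nonneg fun σ => hp0 σ
  have hZ2 : 1/2 ≤ Z := by linarith
  have hZ0 : 0 < Z := by linarith
  have hZ1 : Z ≤ 1 := by linarith
  -- group masses
  set Pk : ℕ → ℝ := fun k => ∑ σ ∈ Big k, p σ with hPk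
  have hPsum : HasSum Pk Z := by
    have h1 : HasSum (L.indicator p) η := by
      rw [← hasSum_subtype_iff_indicator]
      exact (hp.summable.subtype L).hasSum
    have h2 := (hp.sub h1).tsum_fiberwise kc
    suffices hs : Pk = fun k => ∑' b : (kc ⁻¹' {k} : Set α), (p b - L.indicator p b) by
      rw [hs]; exact h2
    funext k
    rw [tsum_subtype (kc ⁻¹' {k}) (fun σ => p σ - L.indicator p σ)]
    rw [tsum_eq_sum (s := Big k)]
    · apply Finset.sum_congr rfl
      intro σ hσ
      obtain ⟨h3, h4⟩ := hBmem k σ hσ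
      rw [Set.indicator_of_mem (by exact h4), Set.indicator_of_notMem, sub_zero]
      intro h5
      exact h5.2 (by rw [h4]; exact hσ)
    · intro σ hσ
      by_cases h4 : kc σ = k
      · rw [Set.indicator_of_mem (by exact h4)]
        by_cases h3 : 0 < p σ
        · rw [Set.indicator_of_mem (show σ ∈ L from ⟨h3, by rw [h4]; exact hσ⟩), sub_self]
        · have h5 : p σ = 0 := le_antisymm (not_lt.1 h3) (hp0 σ)
          rw [Set.indicator_of_notMem (fun h => h3 h.1), h5, sub_zero]
      · exact Set.indicator_of_notMem (by exact h4) _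
  have hPk0 : ∀ k, 0 ≤ Pk k := fun k => Finset.sum_nonneg fun σ _ => hp0 σ
  have hPsum' : HasSum (fun k => Pk k / Z) 1 := by
    have := hPsum.div_const Z
    rwa [div_self hZ0.ne'] at this
  have hP'1 : ∀ k, Pk k / Z ≤ 1 := fun k => le_hasSum hPsum' k fun j _ => div_nonneg (hPk0 j) hZ0.le
  have hPnone : ∀ k, ¬ (Big k).Nonempty → Pk k / Z = 0 := by
    intro k h
    rw [Finset.not_nonempty_iff_eq_empty] at h
    simp [hPk, h]
  have hTq : ∀ k, (Big k).Nonempty → T ≤ (Big k).card := by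
    intro k h
    obtain ⟨h1, h2⟩ := hBcard k h
    rw [h2, hT]
    have := Nat.mul_le_mul_left (2*K^2+K) h1
    omega
  have hPge : ∀ k, (Big k).Nonempty → T * (lam K)^(k+1) ≤ Pk k := by
    intro k h
    have h1 : (Big k).card • (lam K)^(k+1) ≤ Pk k := by
      apply Finset.card_nsmul_le_sum
      intro σ hσ
      obtain ⟨h3, h4⟩ := hBmem k σ hσ
      have := (hkc σ h3).1
      rw [h4] at this
      exact this.le
    rw [nsmul_eq_mul] at h1
    refine le_trans ?_ h1
    have : (T:ℝ) ≤ (Big k).card := by exact_mod_cast hTq k h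
    gcongr
  have hT0 : (0:ℝ) < T := by
    have : 0 < T := by omega
    exact_mod_cast this
  have hPdiv : ∀ k, Pk k ≤ Pk k / Z := by
    intro k
    rw [le_div_iff₀ hZ0]
    exact mul_le_of_le_one_right (hPk0 k) hZ1
  -- N0
  set B : ℕ → Prop := fun i => ∃ σ : L, ∃ j, x σ j = i with hB
  set N0 : ℕ → ℕ := fun n => Nat.count (fun i => ¬ B i) n with hN0
  have hN0s : ∀ n, N0 (n+1) = N0 n + if (∃ σ ∈ L, ∃ j, x σ j = n) then 0 else 1 := by
    intro n
    simp only [hN0, Nat.count_succ]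
    congr 1
    have : B n ↔ ∃ σ ∈ L, ∃ j, x σ j = n := by simp [hB]
    by_cases h : B n
    · rw [if_neg (not_not.2 h), if_pos (this.1 h)]
    · rw [if_pos h, if_neg (fun h' => h (this.2 h'))]
  have hBK : ∀ n, B n → K ∣ n := by
    rintro n ⟨σ, j, rfl⟩
    rw [hxL σ σ.2]
    exact Dvd.intro _ rfl
  have hNZ : Filter.Tendsto (fun n : ℕ => (N0 n : ℝ)/n) Filter.atTop (nhds Z) := by
    apply union_density (fun (σ : L) i => ∃ j, x σ j = i)
    · rintro σ σ' n ⟨j, hj⟩ ⟨j', hj'⟩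
      exact Subtype.ext (hxinj _ σ.2 _ σ'.2 j j' (hj.trans hj'.symm))
    · exact hp.summable.subtype L
    · intro σ n
      have h := (left_seq (fun n => ∃ j, x σ j = n) True (x σ) (by simp) (p σ) (1/(K:ℝ)) σ.2.1 hκ1
        (hxb σ σ.2)).1 n
      simpa only [eq_iff_iff, iff_true] using h
  obtain ⟨g, hg00, hg0, hg1, hgP, hgN⟩ := chain_lemma (fun k => Pk k / Z)
    (fun k => ((lam K)^(k+1))⁻¹ / (T:ℝ)) (fun k => div_nonneg (hPk0 k) hZ0.le) hPsum'
    (fun k => by positivity) (by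
      intro k hk
      have hn : (Big k).Nonempty := by
        by_contra h
        rw [hPnone k h] at hk
        exact lt_irrefl _ hk
      have h1 := (hPge k hn).trans (hPdiv k)
      rw [mul_div_assoc', le_div_iff₀ hT0, one_mul, ← div_eq_mul_inv, le_div_iff₀ (by positivity)]
      exact h1) N0 (by simp [hN0]) (by
      intro n
      rw [hN0s]
      split_ifs
      · left; rfl
      · right; rfl)
  have hgrp : ∀ k, ∃ w : ℕ → α, (Big k).Nonempty → (∀ m, w m ∈ Big k) ∧
      (∀ σ ∈ Big k, Filter.Tendsto (fun n:ℕ => (Nat.count (fun m => w m = σ) n:ℝ)/n) Filter.atTop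
        (nhds (p σ / ∑ τ ∈ Big k, p τ))) ∧
      (∀ m n, m < n → w m = w n → m+2*(K^2*q k) ≤ n+1) ∧
      (∀ σ ∈ Big k, ∀ m, ∃ n, m ≤ n ∧ n < m+2*(K*(K+1)*q k+1)+2 ∧ w n = σ) := by
    intro k
    by_cases h : (Big k).Nonempty
    · obtain ⟨h1, h2⟩ := hBcard k h
      obtain ⟨w, hw⟩ := big_group (Big k) K (q k) k (by omega) (by omega) h2 p (by
        intro σ hσ
        obtain ⟨h3, h4⟩ := hBmem k σ hσ
        have := hkc σ h3
        rwa [h4] at this)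
      exact ⟨w, fun _ => hw⟩
    · exact ⟨fun _ => hne.some, fun h' => absurd h' h⟩
  choose w hw using hgrp
  obtain ⟨s, hsL, hsB, hsN⟩ := assemble L x hxinj Big
    (fun k σ hσ h => h.2 (by rw [(hBmem k σ hσ).2]; exact hσ))
    (fun k k' σ h h' => (hBmem k σ h).2.symm.trans (hBmem k' σ h').2)
    w (fun k h => (hw k h).1) N0 hN0s g hg0 hg1
    (fun k h n => hgP k n (hPnone k h))
  -- per letter conclusions
  have hfinal : ∀ σ, Filter.Tendsto (fun n:ℕ => (Nat.count (fun m => s m = σ) n:ℝ)/n) Filter.atTop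
      (nhds (p σ)) ∧ QRchar s σ ≤ ENNReal.ofReal (1+ε) := by
    intro σ
    by_cases hσ0 : 0 < p σ
    swap
    · have h0 : p σ = 0 := le_antisymm (not_lt.1 hσ0) (hp0 σ)
      have hns : ∀ n, s n ≠ σ := hsN σ (fun h => hσ0 h.1) (fun k h => hσ0 (hBmem k σ h).1)
      constructor
      · have : ∀ n, Nat.count (fun m => s m = σ) n = 0 := by
          intro n
          rw [Nat.count_iff_forall_not]
          exact fun m _ => hns m
        simp only [this, h0]
        simp
      · rw [qr_none s σ hns]
        simp [hε0.le]
    by_cases hσL : σ ∈ L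
    · obtain ⟨h1, h2, h3⟩ := left_seq s σ (x σ) (hsL σ hσL) (p σ) (1/(K:ℝ)) hσ0 hκ1 (hxb σ hσL)
      have ht : 1/(K:ℝ) ≤ 1/16 := by gcongr
      have ht0 : 0 < 1/(K:ℝ) := by positivity
      have ht2 : 12 * (1/(K:ℝ)) ≤ ε := by linarith [show 12*(1/(K:ℝ)) = 12/K by ring]
      constructor
      · have ha : Filter.Tendsto (fun n : ℕ => p σ - 2/(n:ℝ)) Filter.atTop (nhds (p σ)) := by
          simpa using (tendsto_const_nhds (x := p σ)).sub (tendsto_const_div_atTop_nhds_zero_nat 2)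
        apply tendsto_of_tendsto_of_tendsto_of_le_of_le' ha tendsto_const_nhds
        · filter_upwards [Filter.eventually_gt_atTop 0] with n hn
          have hn' : (0:ℝ) < n := by exact_mod_cast hn
          rw [le_div_iff₀ hn', sub_mul, div_mul_cancel₀ _ hn'.ne']
          linarith [(h1 n).2]
        · filter_upwards [Filter.eventually_gt_atTop 0] with n hn
          have hn' : (0:ℝ) < n := by exact_mod_cast hn
          rw [div_le_iff₀ hn']
          linarith [(h1 n).1]
      · refine qr_wrap s σ _ _ ε (div_pos (by linarith) hσ0) hε0 h2 h3 ?_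
        rw [mul_div_assoc']
        gcongr
        nlinarith
    · have hσB : σ ∈ Big (kc σ) := by
        by_contra h
        exact hσL ⟨hσ0, h⟩
      set k := kc σ with hk
      have hn : (Big k).Nonempty := ⟨σ, hσB⟩
      obtain ⟨hq1, hq2⟩ := hBcard k hn
      obtain ⟨hw1, hw2, hw3, hw4⟩ := hw k hn
      have hPpos : 0 < Pk k := lt_of_lt_of_le (by positivity) (hPge k hn)
      have hP'pos : 0 < Pk k / Z := div_pos hPpos hZ0
      set S := ∑ i ∈ Finset.range k, ((lam K)^(i+1))⁻¹ / (T:ℝ) with hS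
      have hS0 : 0 ≤ S := Finset.sum_nonneg fun i _ => by positivity
      have hS1 : S ≤ 2 * ((lam K)^k)⁻¹ / (K:ℝ)^2 := H_sum K (by omega) k
      have hgs : ∀ n, g k (n+1) = g k n ∨ g k (n+1) = g k n + 1 := by
        intro n
        have := hN0s n
        split_ifs at this
        · left; exact hg0 n this k
        · obtain ⟨k', h1, h2⟩ := hg1 n this
          by_cases h : k = k'
          · right; rw [h]; exact h1
          · left; exact h2 k h
      obtain ⟨h1, h2, h3⟩ := time_change s σ (g k) (hg00 k) hgs (w k) (hsB k σ hσB) N0 (Pk k / Z) S Z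
        (p σ / Pk k) K hP'pos hS0 hZ0
        (fun n L => (N0_bounds K (by omega) B hBK n L).1)
        (fun n L => (N0_bounds K (by omega) B hBK n L).2) hNZ (hgN k) (K^2*q k) (K*(K+1)*q k+1)
        (hw2 σ hσB) hw3 (hw4 σ hσB)
      constructor
      · have : p σ / Pk k * (Pk k / Z * Z) = p σ := by field_simp
        rwa [this] at h1
      · have hΛ : ((lam K)^k)⁻¹ ≤ 2*((2*K^2+K)*q k+1 : ℕ)/(Pk k / Z) := by
          have h4 : Pk k ≤ ((2*K^2+K)*q k+1 : ℕ) * (lam K)^k := by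
            rw [← hq2, ← nsmul_eq_mul]
            apply Finset.sum_le_card_nsmul
            intro τ hτ
            obtain ⟨h5, h6⟩ := hBmem k τ hτ
            have := (hkc τ h5).2
            rwa [h6] at this
          rw [le_div_iff₀ hP'pos, inv_mul_le_iff₀ (by positivity), div_le_iff₀ hZ0]
          have h5 : 0 ≤ (((2*K^2+K)*q k+1 : ℕ):ℝ) * (lam K)^k := by positivity
          nlinarith
        obtain ⟨Xmax, hx1, hx2, hx3⟩ := big_numeric K (q k) hK hq1 ε (Pk k / Z) S _ hε hP'pos (hP'1 k) hS1 hΛ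
        refine qr_wrap s σ _ Xmax ε hx1 hε0 h2 ?_ hx2
        intro m n hmn
        rcases Nat.eq_zero_or_pos n with rfl | hnp
        · have h6 : (0:ℝ) ≤ Xmax := by
            have := hx3 0 (by
              have : 0 ≤ 1 - 1/(K:ℝ) := by linarith
              have h7 : 0 ≤ (2*((K*(K+1)*q k+1 : ℕ):ℝ)+3)/(Pk k / Z) := by positivity
              push_cast at h7 ⊢
              linarith)
            simpa using this
          simpa using h6
        · exact hx3 n (h3 m n hmn hnp)
  refine ⟨s, fun σ => ?_, iSup_le fun σ => (hfinal σ).2⟩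
  simp only [ncard_count]
  exact (hfinal σ).1

end QRaux

theorem exists_eps_quasi_regular (ε : ℝ) (hε : 0 < ε) :
    ∃ δ : ℝ, 0 < δ ∧ ∀ (α : Type) [Countable α] (p : α → ℝ),
      (∀ σ, 0 ≤ p σ) → HasSum p 1 → (⨆ σ, p σ) < δ →
      ∃ s : ℕ → α, HasDensity s p ∧ QR s ≤ ENNReal.ofReal (1 + ε) := by
  obtain ⟨N, hN⟩ := exists_nat_gt (12/ε)
  have hK : 16 ≤ max N 16 := le_max_right _ _
  have hKε : 12/((max N 16 : ℕ):ℝ) ≤ ε := by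
    have h1 : (N:ℝ) ≤ ((max N 16 : ℕ):ℝ) := by exact_mod_cast le_max_left N 16
    have h2 : (0:ℝ) < 12/ε := by positivity
    have h3 : (0:ℝ) < ((max N 16 : ℕ):ℝ) := by linarith
    rw [div_lt_iff₀ hε] at hN
    rw [div_le_iff₀ h3]
    nlinarith
  generalize max N 16 = K at hK hKε
  obtain ⟨k0, hk0⟩ := QRaux.k0_exists K ((2*K^2+K)*K+1) (by omega) (by omega)
  have hl := QRaux.lam_pos K
  refine ⟨(QRaux.lam K)^k0, by positivity, ?_⟩
  intro α _ p hp0 hp hsup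
  refine QRaux.main_build K hK ε hKε k0 hk0 α p hp0 hp fun σ => lt_of_le_of_lt ?_ hsup
  apply le_ciSup (f := p)
  refine ⟨1, ?_⟩
  rintro _ ⟨τ, rfl⟩
  exact le_hasSum hp τ fun j _ => hp0 j
end

section
/- Suppose n > 2^9 and (p_1, …, p_n) is a probability distribution with p_1 ≥ p_2 ≥ … ≥ p_n > 0 and p_1/p_n ≤ 2. Then there exists a coloring {f_i}_{i∈{1,…,n}} of ℕ such that for every i: (1) f_i is well-distributed with d(f_i) = p_i, and (2) QR_1(f_i) < 1 + 64·√((log n)/n), where log denotes the natural logarithm. -/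
open scoped ENNReal

/-- The `k`-quasi-regularity of a strictly increasing `f : ℕ → ℕ`:
`QRk k f = ⨆_{q,r ≥ k, n,m} (q/r) · (f(n+r) − f(n)) / (f(m+q) − f(m))`. -/
noncomputable def QRk (k : ℕ) (f : ℕ → ℕ) : ℝ≥0∞ :=
  ⨆ (q : ℕ) (r : ℕ) (_ : k ≤ q) (_ : k ≤ r) (n : ℕ) (m : ℕ),
    ((q : ℝ≥0∞) / (r : ℝ≥0∞)) *
      (((f (n + r) - f n : ℕ) : ℝ≥0∞) / ((f (m + q) - f m : ℕ) : ℝ≥0∞))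

/-- The quasi-regularity of a strictly increasing `f : ℕ → ℕ`:
the supremum of ratios of consecutive gaps. -/
noncomputable def QRfun (f : ℕ → ℕ) : ℝ≥0∞ :=
  ⨆ (n : ℕ) (m : ℕ),
    ((f (n + 1) - f n : ℕ) : ℝ≥0∞) / ((f (m + 1) - f m : ℕ) : ℝ≥0∞)

/-- `f` is well-distributed with density `d`: `|f⁻¹({1,…,n})| / n → d`. -/
def HasDensityFun (f : ℕ → ℕ) (d : ℝ) : Prop :=
  Filter.Tendsto
    (fun n : ℕ => ({m : ℕ | 1 ≤ f m ∧ f m ≤ n}.ncard : ℝ) / (n : ℝ))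
    Filter.atTop (nhds d)

/-- A coloring of `ℕ` with color set `C`: a family of strictly increasing functions `ℕ → ℕ`
such that every natural number is hit exactly once by the whole family. -/
def IsColoring {C : Type*} (f : C → ℕ → ℕ) : Prop :=
  (∀ c, StrictMono (f c)) ∧ ∀ m : ℕ, ∃! ci : C × ℕ, f ci.1 ci.2 = m


lemma aux_hermite (m : ℕ) (hm : 0 < m) (a : ℕ) :
    ∑ j ∈ Finset.range m, (a + j) / m = a := by
  induction a with
  | zero =>
    apply Finset.sum_eq_zero
    intro j hj
    rw [zero_add]
    exact Nat.div_eq_of_lt (Finset.mem_range.1 hj)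
  | succ a ih =>
    have h1 := Finset.sum_range_succ (fun j => (a + j) / m) m
    have h2 := Finset.sum_range_succ' (fun j => (a + j) / m) m
    rw [h1] at h2
    have h3 : (a + m) / m = a / m + 1 := Nat.add_div_right a hm
    have h4 : ∑ j ∈ Finset.range m, (a + 1 + j) / m
        = ∑ j ∈ Finset.range m, (a + (j + 1)) / m :=
      Finset.sum_congr rfl (fun j _ => by congr 1; ring)
    rw [h4]
    simp only [add_zero] at h2
    omega

section prob
open MeasureTheory ProbabilityTheory

lemma aux_subG (L : ℕ) (hL : 0 < L) [NeZero L] (a : ℕ) :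
    HasSubgaussianMGF (fun θ : Fin L => (((a + θ.1) / L : ℕ) : ℝ) - (a : ℝ) / L) ((1/2)^2)
      (uniformOn (Set.univ : Set (Fin L))) := by
  have hL' : (0 : ℝ) < L := by exact_mod_cast hL
  have h := hasSubgaussianMGF_of_mem_Icc_of_integral_eq_zero
    (μ := uniformOn (Set.univ : Set (Fin L)))
    (X := fun θ : Fin L => (((a + θ.1) / L : ℕ) : ℝ) - (a : ℝ) / L)
    (a := ((a / L : ℕ) : ℝ) - (a : ℝ) / L) (b := ((a / L : ℕ) : ℝ) + 1 - (a : ℝ) / L)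
    (measurable_of_finite _).aemeasurable ?_ ?_
  · convert h using 2
    ext
    simp
  · refine Filter.Eventually.of_forall fun θ => ?_
    have h1 : a / L ≤ (a + θ.1) / L := Nat.div_le_div_right (by omega)
    have h2 : (a + θ.1) / L ≤ a / L + 1 := by
      rw [← Nat.add_div_right a hL]
      exact Nat.div_le_div_right (by omega)
    have h1' : ((a / L : ℕ) : ℝ) ≤ ((a + θ.1) / L : ℕ) := by exact_mod_cast h1
    have h2' : (((a + θ.1) / L : ℕ) : ℝ) ≤ (a / L : ℕ) + 1 := by exact_mod_cast h2
    constructor <;> linarith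
  · rw [integral_fintype (Integrable.of_finite)]
    have hm : ∀ θ : Fin L, (uniformOn (Set.univ : Set (Fin L))).real {θ} = 1 / L := by
      intro θ
      rw [measureReal_def, uniformOn_univ]
      simp
    simp only [hm, smul_eq_mul, ← Finset.mul_sum]
    rw [Finset.sum_sub_distrib]
    have := aux_hermite L hL a
    have h5 : ∑ θ : Fin L, (((a + θ.1) / L : ℕ) : ℝ) = a := by
      rw [Fin.sum_univ_eq_sum_range (fun j => (((a + j) / L : ℕ) : ℝ)) L]
      exact_mod_cast this
    rw [h5]
    simp
    right
    field_simp
    simp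

lemma aux_theta (n L N : ℕ) (hn : 0 < n) (hL : 0 < L) (c : Fin N → Fin n → ℕ)
    (hc : ∀ k, ∑ j, c k j = L) (D : ℝ) (hD : 0 ≤ D)
    (hN : 2 * (N * L : ℝ) * Real.exp (-2 * D ^ 2 / n) < 1) :
    ∃ θ : Fin n → Fin L, ∀ k, ∀ t < L,
      |((∑ j, (c k j * t + (θ j).1) / L : ℕ) : ℝ) - t| < D := by
  have : NeZero L := ⟨hL.ne'⟩
  have hL' : (0 : ℝ) < L := by exact_mod_cast hL
  have hn' : (0 : ℝ) < n := by exact_mod_cast hn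
  set μ : Measure (Fin n → Fin L) :=
    Measure.pi (fun _ => uniformOn (Set.univ : Set (Fin L))) with hμ
  let Y : Fin N → ℕ → Fin n → Fin L → ℝ :=
    fun k t j θ => (((c k j * t + θ.1) / L : ℕ) : ℝ) - ((c k j * t : ℕ) : ℝ) / L
  have key : ∀ k t, ∀ θ : Fin n → Fin L,
      ((∑ j, (c k j * t + (θ j).1) / L : ℕ) : ℝ) - t = ∑ j, Y k t j (θ j) := by
    intro k t θ
    simp only [Y]
    rw [Finset.sum_sub_distrib, ← Finset.sum_div]
    push_cast
    rw [← Finset.sum_mul]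
    have : (∑ j, (c k j : ℝ)) = L := by exact_mod_cast hc k
    rw [this]
    congr 1
    field_simp
  have hind : ∀ k t, iIndepFun (fun j (θ : Fin n → Fin L) => Y k t j (θ j)) μ := fun k t =>
    iIndepFun_pi (fun j => (measurable_of_finite _).aemeasurable)
  have hsub : ∀ k t j, HasSubgaussianMGF (fun θ : Fin n → Fin L => Y k t j (θ j)) ((1/2)^2) μ := by
    intro k t j
    have h1 := aux_subG L hL (c k j * t)
    have h2 := (measurePreserving_eval (fun _ : Fin n => uniformOn (Set.univ : Set (Fin L))) j)
    refine HasSubgaussianMGF.of_map (X := Y k t j) (Y := fun θ : Fin n → Fin L => θ j)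
      (μ := μ) (measurable_pi_apply j).aemeasurable ?_
    have h3 : μ.map (fun θ : Fin n → Fin L => θ j) = uniformOn (Set.univ : Set (Fin L)) := h2.map_eq
    rw [h3]
    exact h1
  have hsum := fun k t => HasSubgaussianMGF.sum_of_iIndepFun (hind k t)
    (s := Finset.univ) (fun j _ => hsub k t j)
  have hexp : ∀ x : ℝ, -x ^ 2 / (2 * ((∑ j : Fin n, ((1/2)^2 : NNReal) : NNReal) : ℝ))
      = -2 * x ^ 2 / n := by
    intro x
    simp
    field_simp
  have hup : ∀ k t, μ.real {θ | D ≤ ∑ j, Y k t j (θ j)} ≤ Real.exp (-2 * D ^ 2 / n) := by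
    intro k t
    have := (hsum k t).measure_ge_le hD
    rw [hexp] at this
    exact this
  have hdn : ∀ k t, μ.real {θ | D ≤ -∑ j, Y k t j (θ j)} ≤ Real.exp (-2 * D ^ 2 / n) := by
    intro k t
    have := (hsum k t).neg.measure_ge_le hD
    rw [hexp] at this
    exact this
  by_contra hcon
  push Not at hcon
  have hcov : (Set.univ : Set (Fin n → Fin L)) ⊆ ⋃ kt ∈ (Finset.univ : Finset (Fin N × Fin L)),
      ({θ | D ≤ ∑ j, Y kt.1 kt.2.1 j (θ j)} ∪ {θ | D ≤ -∑ j, Y kt.1 kt.2.1 j (θ j)}) := by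
    intro θ _
    obtain ⟨k, t, ht, h⟩ := hcon θ
    rw [key] at h
    simp only [Set.mem_iUnion]
    refine ⟨(k, ⟨t, ht⟩), Finset.mem_univ _, ?_⟩
    rcases le_abs.1 h with h | h
    · left; exact h
    · right; exact h
  have h1 : μ.real Set.univ ≤ _ := measureReal_mono hcov (measure_ne_top _ _)
  have h2 := h1.trans (measureReal_biUnion_finset_le _ _)
  have h3 : ∀ kt ∈ (Finset.univ : Finset (Fin N × Fin L)),
      μ.real ({θ | D ≤ ∑ j, Y kt.1 kt.2.1 j (θ j)} ∪ {θ | D ≤ -∑ j, Y kt.1 kt.2.1 j (θ j)})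
        ≤ 2 * Real.exp (-2 * D ^ 2 / n) := by
    intro kt _
    refine (measureReal_union_le _ _).trans ?_
    have := hup kt.1 kt.2.1
    have := hdn kt.1 kt.2.1
    linarith
  have h4 := h2.trans (Finset.sum_le_sum h3)
  simp at h4
  have h5 : (2 * (N * L : ℝ) * Real.exp (-2 * D ^ 2 / n)) = N * L * (2 * Real.exp (-(2 * D ^ 2) / n)) := by
    rw [neg_mul]; ring
  linarith

end prob

/-- thresholds -/
noncomputable def auxU (b : ℕ) : ℝ := ((b - Nat.sqrt b ^ 2 : ℕ) : ℝ) / ((2 * Nat.sqrt b + 1 : ℕ) : ℝ)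

lemma auxU_nonneg (b : ℕ) : 0 ≤ auxU b := by unfold auxU; positivity

lemma auxU_lt_one (b : ℕ) : auxU b < 1 := by
  unfold auxU
  rw [div_lt_one (by positivity)]
  have := Nat.sqrt_le_add b
  have h : b - Nat.sqrt b ^ 2 < 2 * Nat.sqrt b + 1 := by
    rw [pow_two]; omega
  exact_mod_cast h

lemma aux_floor_err (x : ℝ) (hx : 0 ≤ x) (b : ℕ) : |((⌊x + auxU b⌋₊ : ℕ) : ℝ) - x| ≤ 1 := by
  have h0 := auxU_nonneg b
  have h1 := auxU_lt_one b
  have h2 := Nat.floor_le (add_nonneg hx h0)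
  have h3 := Nat.lt_floor_add_one (x + auxU b)
  rw [abs_le]; constructor <;> linarith

lemma aux_superblock (x : ℝ) (hx : 0 ≤ x) (s : ℕ) :
    |∑ j ∈ Finset.range (2 * s + 1), (((⌊x + auxU (s ^ 2 + j)⌋₊ : ℕ) : ℝ) - x)| ≤ 1 := by
  set m := 2 * s + 1 with hm
  have hm0 : (0 : ℝ) < m := by positivity
  have h1 : ∀ j ∈ Finset.range m, ((⌊x + auxU (s ^ 2 + j)⌋₊ : ℕ) : ℝ) - x
      = (((⌊m * x⌋₊ + j) / m : ℕ) : ℝ) - x := by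
    intro j hj
    have hj' := Finset.mem_range.1 hj
    have hs : Nat.sqrt (s ^ 2 + j) = s := by
      rw [pow_two]; exact Nat.sqrt_add_eq s (by omega)
    have hu : auxU (s ^ 2 + j) = (j : ℝ) / m := by
      unfold auxU
      rw [hs]
      simp [hm]
    rw [hu]
    have : x + (j : ℝ) / m = (m * x + j) / m := by field_simp
    rw [this, Nat.floor_div_natCast, Nat.floor_add_natCast (by positivity)]
  rw [Finset.sum_congr rfl h1, Finset.sum_sub_distrib]
  have h2 : ∑ j ∈ Finset.range m, (((⌊m * x⌋₊ + j) / m : ℕ) : ℝ) = (⌊m * x⌋₊ : ℕ) := by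
    exact_mod_cast aux_hermite m (by omega) ⌊m * x⌋₊
  rw [h2]
  simp only [Finset.sum_const, Finset.card_range, nsmul_eq_mul]
  have h3 := Nat.floor_le (show 0 ≤ m * x by positivity)
  have h4 := Nat.lt_floor_add_one (m * x)
  rw [abs_le]; constructor <;> linarith

lemma aux_avg_sq (x : ℝ) (hx : 0 ≤ x) (s : ℕ) :
    |∑ b ∈ Finset.range (s ^ 2), (((⌊x + auxU b⌋₊ : ℕ) : ℝ) - x)| ≤ s := by
  induction s with
  | zero => simp
  | succ s ih =>
    rw [show (s + 1) ^ 2 = s ^ 2 + (2 * s + 1) by ring, Finset.sum_range_add]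
    refine (abs_add_le _ _).trans ?_
    have := aux_superblock x hx s
    push_cast
    linarith

lemma aux_avg (x : ℝ) (hx : 0 ≤ x) (B : ℕ) :
    |∑ b ∈ Finset.range B, ((⌊x + auxU b⌋₊ : ℕ) : ℝ) - B * x| ≤ 3 * Real.sqrt B := by
  have h0 : ∑ b ∈ Finset.range B, ((⌊x + auxU b⌋₊ : ℕ) : ℝ) - B * x
    = ∑ b ∈ Finset.range B, (((⌊x + auxU b⌋₊ : ℕ) : ℝ) - x) := by
    rw [Finset.sum_sub_distrib]; simp
  rw [h0]
  obtain ⟨s, r, hr, rfl⟩ : ∃ s r, r ≤ 2 * s ∧ B = s ^ 2 + r := by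
    have h1 := Nat.sqrt_le B
    have h2 := Nat.sqrt_le_add B
    refine ⟨Nat.sqrt B, B - Nat.sqrt B ^ 2, ?_, ?_⟩
    · rw [pow_two]; omega
    · rw [pow_two]; omega
  have h4 : (s : ℝ) ≤ Real.sqrt (s ^ 2 + r : ℕ) := by
    apply Real.le_sqrt_of_sq_le
    push_cast
    linarith [Nat.cast_nonneg (α := ℝ) r]
  rw [Finset.sum_range_add]
  refine (abs_add_le _ _).trans ?_
  have h3 : |∑ j ∈ Finset.range r, (((⌊x + auxU (s ^ 2 + j)⌋₊ : ℕ) : ℝ) - x)| ≤ 2 * s := by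
    refine (Finset.abs_sum_le_sum_abs _ _).trans ?_
    refine (Finset.sum_le_sum (fun j _ => aux_floor_err x hx _)).trans ?_
    simp
    exact_mod_cast hr
  have := aux_avg_sq x hx s
  linarith

/-- finitely many rounding vectors -/
lemma aux_fin_vec (n : ℕ) (S : ℕ → ℝ) (hS0 : S 0 = 0) (hS : ∀ i, 0 ≤ S i) (u : ℝ) (hu : 0 ≤ u)
    (hu1 : u < 1) : ∃ i ∈ Finset.range (n + 1), ∀ j ∈ Finset.range (n + 1),
      ⌊S j + u⌋₊ = ⌊S j + Int.fract (-S i)⌋₊ := by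
  obtain ⟨i, hi, hmin⟩ := Finset.exists_min_image (Finset.range (n + 1))
    (fun i => Int.fract (S i + u)) ⟨0, by simp⟩
  refine ⟨i, hi, fun j hj => ?_⟩
  have h0 : Int.fract (S i + u) ≤ u := by
    have := hmin 0 (by simp)
    rw [hS0, zero_add, Int.fract_eq_self.2 ⟨hu, hu1⟩] at this
    exact this
  have hf : Int.fract (-S i) = u - Int.fract (S i + u) := by
    rw [Int.fract_eq_iff]
    refine ⟨by linarith, by have := Int.fract_nonneg (S i + u); linarith, -⌊S i + u⌋, ?_⟩
    have := Int.floor_add_fract (S i + u)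
    push_cast
    linarith
  have hj' := hmin j hj
  have hnn := Int.fract_nonneg (S i + u)
  rw [hf, ← Int.floor_toNat, ← Int.floor_toNat]
  congr 1
  symm
  rw [Int.floor_eq_iff]
  have h1 := Int.floor_add_fract (S j + u)
  have h2 := Int.fract_lt_one (S j + u)
  constructor <;> linarith
lemma aux_step (W : ℕ → ℕ) (h0 : W 0 = 0) (hm : Monotone W) (hs : ∀ s, W (s + 1) ≤ W s + 1)
    (hunb : ∀ m, ∃ s, m ≤ W s) (m : ℕ) : ∃ s, W s = m ∧ W (s + 1) = m + 1 := by
  classical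
  have hex : ∃ s, m + 1 ≤ W s := hunb (m + 1)
  have h1 := Nat.find_spec hex
  have h2 : ∀ k, k < Nat.find hex → ¬ (m + 1 ≤ W k) := fun k hk => Nat.find_min hex hk
  obtain ⟨s, hs'⟩ : ∃ s, Nat.find hex = s + 1 := by
    refine Nat.exists_eq_succ_of_ne_zero ?_
    intro h
    rw [h, h0] at h1
    omega
  rw [hs'] at h1
  have h3 := h2 s (by omega)
  have h4 := hs s
  exact ⟨s, by omega, by omega⟩

lemma aux_step_unique (W : ℕ → ℕ) (hm : Monotone W) (m s s' : ℕ) (h1 : W s = m)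
    (h2 : W (s + 1) = m + 1) (h1' : W s' = m) (h2' : W (s' + 1) = m + 1) : s = s' := by
  rcases lt_trichotomy s s' with h | h | h
  · have := hm (show s + 1 ≤ s' from h); omega
  · exact h
  · have := hm (show s' + 1 ≤ s from h); omega

/-- Sorting lemma: counting functions give a coloring. -/
lemma aux_coloring (n : ℕ) (hn : 0 < n) (A : Fin n → ℕ → ℕ) (h0 : ∀ j, A j 0 = 0)
    (hm : ∀ j, Monotone (A j)) (hs : ∀ j s, A j (s + 1) ≤ A j s + 1)
    (hunb : ∀ j m, ∃ s, m ≤ A j s) :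
    ∃ (f : Fin n → ℕ → ℕ) (τ : Fin n → ℕ → ℕ), IsColoring f ∧ ∀ j k,
      A j (τ j k) = k ∧ A j (τ j k + 1) = k + 1 ∧ ∑ i, A i (τ j k) ≤ f j k ∧
      f j k ≤ ∑ i, A i (τ j k + 1) := by
  choose τ hτ1 hτ2 using fun j k => aux_step (A j) (h0 j) (hm j) (hs j) (hunb j) k
  let w : ℕ → ℕ := fun r => A ⟨r % n, Nat.mod_lt _ hn⟩ (r / n + 1) - A ⟨r % n, Nat.mod_lt _ hn⟩ (r / n)
  let W : ℕ → ℕ := fun s => ∑ r ∈ Finset.range s, w r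
  have hw : ∀ (j : Fin n) T, w (n * T + j.1) = A j (T + 1) - A j T := by
    intro j T
    have h1 : (n * T + j.1) % n = j.1 := by
      rw [Nat.mul_add_mod, Nat.mod_eq_of_lt j.2]
    have h2 : (n * T + j.1) / n = T := by
      rw [Nat.mul_add_div hn, Nat.div_eq_of_lt j.2, add_zero]
    simp only [w, h1, h2]
  have hWs : ∀ s, W (s + 1) = W s + w s := fun s => Finset.sum_range_succ _ _
  have hw1 : ∀ r, w r ≤ 1 := by
    intro r
    have := hs ⟨r % n, Nat.mod_lt _ hn⟩ (r / n)
    simp only [w]; omega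
  have hWm : Monotone W := monotone_nat_of_le_succ (fun s => by rw [hWs]; omega)
  have hWn : ∀ T, W (n * T) = ∑ i, A i T := by
    intro T
    induction T with
    | zero => simp [W, h0]
    | succ T ih =>
      have : W (n * (T + 1)) = W (n * T) + ∑ j : Fin n, (A j (T + 1) - A j T) := by
        simp only [W]
        rw [mul_add, mul_one, Finset.sum_range_add, ← Fin.sum_univ_eq_sum_range (fun x => w (n * T + x)) n]
        congr 1
        exact Finset.sum_congr rfl (fun j _ => hw j T)
      rw [this, ih, ← Finset.sum_add_distrib]
      refine Finset.sum_congr rfl (fun j _ => ?_)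
      have := hm j (Nat.le_succ T)
      simp only [Nat.succ_eq_add_one] at this
      omega
  have hτm : ∀ j, StrictMono (τ j) := by
    intro j
    refine strictMono_nat_of_lt_succ (fun k => ?_)
    by_contra h
    have := hm j (not_lt.1 h)
    rw [hτ1, hτ1] at this
    omega
  let f : Fin n → ℕ → ℕ := fun j k => W (n * τ j k + j.1)
  have hf1 : ∀ j k, W (n * τ j k + j.1 + 1) = f j k + 1 := by
    intro j k
    rw [hWs, hw, hτ1, hτ2]
    simp [f]
  refine ⟨f, τ, ⟨fun j => ?_, fun m => ?_⟩, fun j k => ⟨hτ1 j k, hτ2 j k, ?_, ?_⟩⟩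
  · refine strictMono_nat_of_lt_succ (fun k => ?_)
    have h1 := hf1 j k
    have h2 : n * τ j k + j.1 + 1 ≤ n * τ j (k + 1) + j.1 := by
      have := hτm j (Nat.lt_succ_self k)
      have := Nat.mul_lt_mul_of_pos_left this hn
      simp only [Nat.succ_eq_add_one] at this
      omega
    have := hWm h2
    simp only [f] at *
    omega
  · obtain ⟨s, hs1, hs2⟩ := aux_step W (by simp [W]) hWm (fun s => by rw [hWs]; have := hw1 s; omega)
      (fun m => by
        obtain ⟨s, hs⟩ := hunb ⟨0, hn⟩ m
        refine ⟨n * s, hs.trans ?_⟩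
        rw [hWn]
        exact Finset.single_le_sum (f := fun i => A i s) (fun i _ => Nat.zero_le _)
          (Finset.mem_univ (⟨0, hn⟩ : Fin n))) m
    obtain ⟨j, T, hjT⟩ : ∃ (j : Fin n) (T : ℕ), s = n * T + j.1 :=
      ⟨⟨s % n, Nat.mod_lt _ hn⟩, s / n, (Nat.div_add_mod s n).symm⟩
    have hstep : A j (T + 1) = A j T + 1 := by
      have h1 := hWs s
      rw [hs1, hs2, hjT, hw] at h1
      omega
    have hT : τ j (A j T) = T :=
      aux_step_unique (A j) (hm j) (A j T) _ _ (hτ1 _ _) (hτ2 _ _) rfl hstep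
    refine ⟨(j, A j T), ?_, ?_⟩
    · simp only [f, hT, ← hjT, hs1]
    · rintro ⟨j', k'⟩ h
      simp only at h
      have h1 := hf1 j' k'
      rw [h] at h1
      have h2 : n * τ j' k' + j'.1 = s := aux_step_unique W hWm m _ _ h h1 hs1 hs2
      have hjj : j' = j := by
        have := congrArg (· % n) (h2.trans hjT)
        simp only [Nat.mul_add_mod, Nat.mod_eq_of_lt j.2, Nat.mod_eq_of_lt j'.2] at this
        exact Fin.ext this
      subst hjj
      have h3 : τ j' k' = T := by
        have : n * τ j' k' = n * T := by omega
        exact Nat.eq_of_mul_eq_mul_left hn this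
      have : k' = A j' T := by rw [← h3, hτ1]
      rw [this]
  · rw [← hWn]; exact hWm (by omega)
  · rw [← hWn]; refine hWm ?_
    have := j.2
    rw [mul_add]; omega

lemma aux_QR (f : ℕ → ℕ) (hf : StrictMono f) (a b : ℝ) (ha : 0 < a) (hb : 0 ≤ b)
    (h : ∀ k, a ≤ (f (k + 1) : ℝ) - f k ∧ (f (k + 1) : ℝ) - f k ≤ b) :
    QRk 1 f ≤ ENNReal.ofReal (b / a) := by
  have hsum : ∀ n r : ℕ, r * a ≤ (f (n + r) : ℝ) - f n ∧ (f (n + r) : ℝ) - f n ≤ r * b := by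
    intro n r
    induction r with
    | zero => simp
    | succ r ih =>
      have := h (n + r)
      rw [← add_assoc]
      push_cast
      constructor <;> nlinarith
  unfold QRk
  refine iSup_le fun q => iSup_le fun r => iSup_le fun hq => iSup_le fun hr => iSup_le fun n =>
    iSup_le fun m => ?_
  have hq' : (0 : ℝ) < q := by exact_mod_cast hq
  have hr' : (0 : ℝ) < r := by exact_mod_cast hr
  have h1 := (hsum n r).2
  have h2 := (hsum m q).1
  have e1 : ((f (n + r) - f n : ℕ) : ℝ) = (f (n + r) : ℝ) - f n :=
    Nat.cast_sub (hf.monotone (by omega))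
  have e2 : ((f (m + q) - f m : ℕ) : ℝ) = (f (m + q) : ℝ) - f m :=
    Nat.cast_sub (hf.monotone (by omega))
  rw [← e1] at h1
  rw [← e2] at h2
  have hy : (0 : ℝ) < ((f (m + q) - f m : ℕ) : ℝ) := lt_of_lt_of_le (by positivity) h2
  generalize (f (n + r) - f n : ℕ) = x at *
  generalize (f (m + q) - f m : ℕ) = y at *
  rw [← ENNReal.ofReal_natCast q, ← ENNReal.ofReal_natCast r, ← ENNReal.ofReal_natCast x,
    ← ENNReal.ofReal_natCast y, ← ENNReal.ofReal_div_of_pos hr', ← ENNReal.ofReal_div_of_pos hy,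
    ← ENNReal.ofReal_mul (by positivity)]
  refine ENNReal.ofReal_le_ofReal ?_
  rw [div_mul_div_comm, div_le_div_iff₀ (by positivity) ha]
  calc (q : ℝ) * x * a = (q * a) * x := by ring
    _ ≤ y * (r * b) := by gcongr
    _ = b * (r * y) := by ring

lemma aux_density (f A τ : ℕ → ℕ) (hf : StrictMono f) (hA : Monotone A)
    (hs : ∀ s, A (s + 1) ≤ A s + 1) (D : ℕ)
    (hτ1 : ∀ k, A (τ k) = k)
    (hf1 : ∀ k, τ k ≤ f k + D) (hf2 : ∀ k, f k ≤ τ k + D) (p K : ℝ) 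
    (hAp : ∀ N : ℕ, |(A N : ℝ) - p * N| ≤ K + K * Real.sqrt N) : HasDensityFun f p := by
  have hlip : ∀ N d, A (N + d) ≤ A N + d := by
    intro N d
    induction d with
    | zero => simp
    | succ d ih => have := hs (N + d); rw [← add_assoc]; omega
  have hcount : ∀ N : ℕ, {m : ℕ | 1 ≤ f m ∧ f m ≤ N}.ncard ≤ A N + D + 1 ∧
      A N ≤ {m : ℕ | 1 ≤ f m ∧ f m ≤ N}.ncard + D + 1 := by
    intro N
    have hsub : {m : ℕ | 1 ≤ f m ∧ f m ≤ N} ⊆ (Finset.range (A N + D + 1) : Set ℕ) := by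
      rintro m ⟨_, hm⟩
      have h1 := hf1 m
      have h2 := hA (show τ m ≤ N + D by omega)
      have h3 := hlip N D
      rw [hτ1] at h2
      simp; omega
    have hfin : {m : ℕ | 1 ≤ f m ∧ f m ≤ N}.Finite := Set.Finite.subset (Finset.finite_toSet _) hsub
    constructor
    · have := Set.ncard_le_ncard hsub (Finset.finite_toSet _)
      rw [Set.ncard_coe_finset, Finset.card_range] at this
      exact this
    · have hsub2 : (Finset.Ico 1 (A N - D) : Set ℕ) ⊆ {m : ℕ | 1 ≤ f m ∧ f m ≤ N} := by
        intro m hm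
        simp at hm
        refine ⟨?_, ?_⟩
        · have := hf.id_le m
          simp at this; omega
        · by_contra hcon
          have h1 := hf2 m
          have h2 := hA (show N ≤ τ m + D by omega)
          have h3 := hlip (τ m) D
          rw [hτ1] at h3
          omega
      have := Set.ncard_le_ncard hsub2 hfin
      rw [Set.ncard_coe_finset, Nat.card_Ico] at this
      omega
  unfold HasDensityFun
  have hK : 0 ≤ K := by
    have := (abs_nonneg _).trans (hAp 0)
    simpa using this
  rw [tendsto_iff_norm_sub_tendsto_zero]
  have hlim : Filter.Tendsto (fun N : ℕ => (K + D + 1) * (1 / (N : ℝ)) + K * (1 / Real.sqrt N))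
      Filter.atTop (nhds 0) := by
    have h1 := tendsto_one_div_atTop_nhds_zero_nat (𝕜 := ℝ)
    have h2 : Filter.Tendsto (fun N : ℕ => 1 / Real.sqrt N) Filter.atTop (nhds 0) := by
      simp only [one_div]
      exact tendsto_inv_atTop_zero.comp (Real.tendsto_sqrt_atTop.comp tendsto_natCast_atTop_atTop)
    simpa using (h1.const_mul (K + D + 1)).add (h2.const_mul K)
  refine squeeze_zero' (Filter.Eventually.of_forall fun _ => norm_nonneg _) ?_ hlim
  filter_upwards [Filter.eventually_gt_atTop 0] with N hN
  have hN' : (0 : ℝ) < N := by exact_mod_cast hN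
  obtain ⟨h1, h2⟩ := hcount N
  have h3 := hAp N
  generalize {m : ℕ | 1 ≤ f m ∧ f m ≤ N}.ncard = x at *
  have h1' : (x : ℝ) ≤ A N + D + 1 := by exact_mod_cast h1
  have h2' : (A N : ℝ) ≤ x + D + 1 := by exact_mod_cast h2
  have h4 : |(x : ℝ) - p * N| ≤ K + D + 1 + K * Real.sqrt N := by
    rw [abs_le] at *
    constructor <;> linarith
  have e : (x : ℝ) / N - p = (x - p * N) / N := by field_simp
  rw [Real.norm_eq_abs, e, abs_div, abs_of_pos hN', div_le_iff₀ hN']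
  refine h4.trans (le_of_eq ?_)
  have hsq : Real.sqrt N * Real.sqrt N = N := Real.mul_self_sqrt hN'.le
  have hsp : 0 < Real.sqrt N := Real.sqrt_pos.2 hN'
  have : 1 / Real.sqrt N * N = Real.sqrt N := by
    rw [div_mul_eq_mul_div, one_mul, div_eq_iff hsp.ne', hsq]
  rw [add_mul, mul_assoc, mul_assoc, this]
  field_simp

lemma aux_block_sum (L : ℕ) (hL : 0 < L) (g : ℕ → ℕ) (b t : ℕ) (ht : t ≤ L) :
    ∑ r ∈ Finset.range (b * L + t), g (r / L)
      = L * ∑ b' ∈ Finset.range b, g b' + g b * t := by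
  have h1 : ∀ b t, t ≤ L → ∑ x ∈ Finset.range t, g ((b * L + x) / L) = g b * t := by
    intro b t ht
    have : ∀ x ∈ Finset.range t, g ((b * L + x) / L) = g b := by
      intro x hx
      have hx' := Finset.mem_range.1 hx
      rw [mul_comm, Nat.mul_add_div hL, Nat.div_eq_of_lt (by omega), add_zero]
    rw [Finset.sum_congr rfl this]
    simp [mul_comm]
  rw [Finset.sum_range_add, h1 b t ht]
  congr 1
  clear ht t
  induction b with
  | zero => simp
  | succ b ih =>
    rw [add_mul, one_mul, Finset.sum_range_add, h1 b L le_rfl, ih, Finset.sum_range_succ]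
    ring

lemma aux_construct (n L : ℕ) (hn : 0 < n) (hL : 0 < L) (c : ℕ → Fin n → ℕ) (θ : Fin n → Fin L)
    (κ : Fin n → ℕ) (hκ : ∀ j, 1 ≤ κ j) (hκL : ∀ j, κ j + 1 ≤ L)
    (hc1 : ∀ b j, κ j ≤ c b j) (hc2 : ∀ b j, c b j ≤ κ j + 1)
    (hsum : ∀ b, ∑ j, c b j = L) (D : ℝ)
    (hdisc : ∀ b, ∀ t < L, |((∑ j, (c b j * t + (θ j).1) / L : ℕ) : ℝ) - t| < D)
    (p : Fin n → ℝ)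
    (havg : ∀ j b, |((∑ b' ∈ Finset.range b, c b' j : ℕ) : ℝ) - b * (p j * L)| ≤ 6 * Real.sqrt b) :
    ∃ f : Fin n → ℕ → ℕ, IsColoring f ∧ ∀ j, HasDensityFun (f j) (p j) ∧ ∀ k,
      (L : ℝ) / (κ j + 1) - (2 + 2 * D) ≤ (f j (k + 1) : ℝ) - f j k ∧
      (f j (k + 1) : ℝ) - f j k ≤ (L : ℝ) / κ j + (2 + 2 * D) := by
  have hLr : (0 : ℝ) < L := by exact_mod_cast hL
  let Φ : Fin n → ℕ → ℕ := fun j T => (θ j).1 + ∑ r ∈ Finset.range T, c (r / L) j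
  let A : Fin n → ℕ → ℕ := fun j T => Φ j T / L
  have hΦs : ∀ j T, Φ j (T + 1) = Φ j T + c (T / L) j := by
    intro j T
    simp only [Φ]
    rw [Finset.sum_range_succ]; ring
  have hΦ1 : ∀ j T d, Φ j T + κ j * d ≤ Φ j (T + d) := by
    intro j T d
    induction d with
    | zero => simp
    | succ d ih =>
      rw [← add_assoc, hΦs]
      have := hc1 ((T + d) / L) j
      rw [mul_add]; omega
  have hΦ2 : ∀ j T d, Φ j (T + d) ≤ Φ j T + (κ j + 1) * d := by
    intro j T d
    induction d with
    | zero => simp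
    | succ d ih =>
      rw [← add_assoc, hΦs]
      have := hc2 ((T + d) / L) j
      rw [mul_add]; omega
  have hΦm : ∀ j, Monotone (Φ j) := fun j => monotone_nat_of_le_succ (fun T => by rw [hΦs]; omega)
  have hA0 : ∀ j, A j 0 = 0 := by
    intro j
    simp only [A, Φ, Finset.range_zero, Finset.sum_empty, add_zero]
    exact Nat.div_eq_of_lt (θ j).2
  have hAm : ∀ j, Monotone (A j) := fun j a b h => Nat.div_le_div_right (hΦm j h)
  have hAs : ∀ j s, A j (s + 1) ≤ A j s + 1 := by
    intro j s
    simp only [A]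
    rw [← Nat.add_div_right _ hL]
    refine Nat.div_le_div_right ?_
    have := hΦ2 j s 1
    have := hκL j
    omega
  have hAu : ∀ j m, ∃ s, m ≤ A j s := by
    intro j m
    refine ⟨m * L, ?_⟩
    simp only [A]
    rw [Nat.le_div_iff_mul_le hL]
    have h1 := hΦ1 j 0 (m * L)
    have h2 := Nat.mul_le_mul_right (m * L) (hκ j)
    rw [zero_add] at h1
    omega
  have hAb : ∀ j b t, t ≤ L → A j (b * L + t)
      = ∑ b' ∈ Finset.range b, c b' j + (c b j * t + (θ j).1) / L := by
    intro j b t ht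
    simp only [A, Φ]
    rw [aux_block_sum L hL (fun b => c b j) b t ht, ← Nat.mul_add_div hL]
    congr 1; ring
  have hdec : ∀ T : ℕ, ∃ b t, t < L ∧ T = b * L + t ∧ b ≤ T := fun T =>
    ⟨T / L, T % L, Nat.mod_lt _ hL, (Nat.div_add_mod' T L).symm, Nat.div_le_self _ _⟩
  have hAD : ∀ T : ℕ, |((∑ j, A j T : ℕ) : ℝ) - T| < D := by
    intro T
    obtain ⟨b, t, ht, rfl, _⟩ := hdec T
    have h1 : ∑ j, A j (b * L + t) = b * L + ∑ j, (c b j * t + (θ j).1) / L := by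
      rw [Finset.sum_congr rfl (fun j _ => hAb j b t ht.le), Finset.sum_add_distrib,
        Finset.sum_comm, Finset.sum_congr rfl (fun b' _ => hsum b')]
      simp
    rw [h1]
    have h2 := hdisc b t ht
    have : ((b * L + ∑ j, (c b j * t + (θ j).1) / L : ℕ) : ℝ) - ((b * L + t : ℕ) : ℝ)
      = ((∑ j, (c b j * t + (θ j).1) / L : ℕ) : ℝ) - t := by
      push_cast; ring
    rw [this]
    exact h2
  obtain ⟨f, τ, hf, hτ⟩ := aux_coloring n hn A hA0 hAm hAs hAu
  have hlow : ∀ j k, (τ j k : ℝ) - D < f j k := by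
    intro j k
    have h1 := (abs_lt.1 (hAD (τ j k))).1
    have h2 : ((∑ i, A i (τ j k) : ℕ) : ℝ) ≤ f j k := by exact_mod_cast (hτ j k).2.2.1
    linarith
  have hupp : ∀ j k, (f j k : ℝ) < τ j k + 1 + D := by
    intro j k
    have h1 := (abs_lt.1 (hAD (τ j k + 1))).2
    have h2 : (f j k : ℝ) ≤ ((∑ i, A i (τ j k + 1) : ℕ) : ℝ) := by exact_mod_cast (hτ j k).2.2.2
    push_cast at h1 h2
    linarith
  refine ⟨f, hf, fun j => ⟨?_, fun k => ?_⟩⟩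
  · have hDn := Nat.le_ceil D
    refine aux_density (f j) (A j) (τ j) (hf.1 j) (hAm j) (hAs j) (⌈D⌉₊ + 1) (fun k => (hτ j k).1)
      (fun k => ?_) (fun k => ?_) (p j) (L + L * |p j| + 6) ?_
    · have := hlow j k
      have : (τ j k : ℝ) ≤ f j k + (⌈D⌉₊ + 1) := by linarith
      exact_mod_cast this
    · have := hupp j k
      have : (f j k : ℝ) ≤ τ j k + (⌈D⌉₊ + 1) := by linarith
      exact_mod_cast this
    · intro N
      obtain ⟨b, t, ht, rfl, hb⟩ := hdec N
      rw [hAb j b t ht.le]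
      have h1 := havg j b
      have hsq : Real.sqrt b ≤ Real.sqrt (b * L + t : ℕ) :=
        Real.sqrt_le_sqrt (by exact_mod_cast hb)
      have h2 : (c b j * t + (θ j).1) / L ≤ L := by
        have h3 : c b j * t + (θ j).1 < L * (L + 1) := by
          have := Nat.mul_le_mul ((hc2 b j).trans (hκL j)) ht.le
          have := (θ j).2
          rw [mul_add]; omega
        have := Nat.div_lt_of_lt_mul h3
        omega
      have h2' : (((c b j * t + (θ j).1) / L : ℕ) : ℝ) ≤ L := by exact_mod_cast h2
      have h2'' : (0 : ℝ) ≤ (((c b j * t + (θ j).1) / L : ℕ) : ℝ) := Nat.cast_nonneg _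
      have h4 : |p j * t| ≤ L * |p j| := by
        rw [abs_mul, mul_comm, Nat.abs_cast]
        gcongr
      set y := (c b j * t + (θ j).1) / L
      set X := ∑ b' ∈ Finset.range b, c b' j
      have e : ((X + y : ℕ) : ℝ) - p j * ((b * L + t : ℕ) : ℝ)
        = ((X : ℝ) - b * (p j * L)) + y - p j * t := by push_cast; ring
      rw [e]
      have h0 := Real.sqrt_nonneg (b * L + t : ℕ)
      have h5 : 0 ≤ (L + L * |p j|) * Real.sqrt (b * L + t : ℕ) := by positivity
      rw [abs_le] at *
      constructor <;> nlinarith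
  · have hk := hτ j k
    have hk' := hτ j (k + 1)
    have a1 : Φ j (τ j k) < (k + 1) * L := by
      have h := hk.1
      have := Nat.lt_div_mul_add hL (a := Φ j (τ j k))
      simp only [A] at h
      rw [h] at this
      rw [add_mul]; omega
    have a2 : (k + 1) * L ≤ Φ j (τ j k + 1) := by
      have h := hk.2.1
      have := Nat.div_mul_le_self (Φ j (τ j k + 1)) L
      simp only [A] at h
      rwa [h] at this
    have a3 : Φ j (τ j (k + 1)) < (k + 1 + 1) * L := by
      have h := hk'.1
      have := Nat.lt_div_mul_add hL (a := Φ j (τ j (k + 1)))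
      simp only [A] at h
      rw [h] at this
      rw [add_mul _ 1]; omega
    have a4 : (k + 1 + 1) * L ≤ Φ j (τ j (k + 1) + 1) := by
      have h := hk'.2.1
      have := Nat.div_mul_le_self (Φ j (τ j (k + 1) + 1)) L
      simp only [A] at h
      rwa [h] at this
    have hlt : τ j k + 1 ≤ τ j (k + 1) := by
      by_contra h
      have h1 := hAm j (show τ j (k + 1) ≤ τ j k by omega)
      rw [hk.1, hk'.1] at h1
      omega
    obtain ⟨d, hd⟩ := Nat.exists_eq_add_of_le hlt
    have hdr : (τ j (k + 1) : ℝ) = τ j k + 1 + d := by exact_mod_cast hd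
    have hκr : (0 : ℝ) < κ j := by exact_mod_cast hκ j
    have b1 : κ j * d ≤ L := by
      have := hΦ1 j (τ j k + 1) d
      rw [← hd] at this
      rw [add_mul _ 1] at a3; omega
    have b2 : L ≤ (κ j + 1) * (d + 2) := by
      have := hΦ2 j (τ j k) (d + 2)
      rw [show τ j k + (d + 2) = τ j (k + 1) + 1 by omega] at this
      rw [add_mul _ 1] at a4; omega
    have b1' : (d : ℝ) ≤ L / κ j := by
      rw [le_div_iff₀ hκr, mul_comm]; exact_mod_cast b1
    have b2' : (L : ℝ) / (κ j + 1) ≤ d + 2 := by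
      rw [div_le_iff₀ (by positivity), mul_comm]; exact_mod_cast b2
    have c1 := hlow j k
    have c2 := hupp j k
    have c3 := hlow j (k + 1)
    have c4 := hupp j (k + 1)
    constructor <;> linarith

lemma aux_numeric (n : ℕ) (hn : 2 ^ 9 < n) (κ x : ℝ) (hx1 : (n : ℝ) / 2 ≤ x) (hx2 : x ≤ 2 * n)
    (hκ1 : κ ≤ x) (hκ2 : x < κ + 1) :
    0 < (n : ℝ) ^ 2 / (κ + 1) - (2 + 2 * Real.sqrt (2 * n * Real.log n)) ∧
    ((n : ℝ) ^ 2 / κ + (2 + 2 * Real.sqrt (2 * n * Real.log n))) /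
      ((n : ℝ) ^ 2 / (κ + 1) - (2 + 2 * Real.sqrt (2 * n * Real.log n)))
      < 1 + 64 * Real.sqrt (Real.log n / n) := by
  have hn' : (513 : ℝ) ≤ n := by
    have : 513 ≤ n := by norm_num at hn; omega
    exact_mod_cast this
  have hn0 : (0 : ℝ) < n := by linarith
  have hlog2 : Real.log 512 = 9 * Real.log 2 := by
    rw [show (512 : ℝ) = 2 ^ 9 by norm_num, Real.log_pow]; norm_num
  have hlogge : 6 ≤ Real.log n := by
    have h1 : Real.log 512 ≤ Real.log n := Real.log_le_log (by norm_num) (by linarith)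
    have := Real.log_two_gt_d9
    linarith
  set s := Real.sqrt (Real.log n / n) with hs
  have hs0 : 0 ≤ s := Real.sqrt_nonneg _
  have hs2 : s ^ 2 = Real.log n / n := Real.sq_sqrt (by positivity)
  have hs2' : n * s ^ 2 = Real.log n := by rw [hs2]; field_simp
  have hsup : s ≤ 0.1125 := by
    have he : Real.exp 1 ≤ 512 := by have := Real.exp_one_lt_d9; linarith
    have h1 : Real.log n / n ≤ Real.log 512 / 512 :=
      Real.log_div_self_antitoneOn (show Real.exp 1 ≤ (512 : ℝ) from he)
        (show Real.exp 1 ≤ (n : ℝ) by linarith) (by linarith)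
    have := Real.log_two_lt_d9
    apply abs_le_of_sq_le_sq' _ (by norm_num) |>.2
    rw [hs2, hlog2] at *
    linarith
  have hns : 55 ≤ n * s := by
    apply abs_le_of_sq_le_sq' _ (by positivity) |>.2
    have : (n * s) ^ 2 = n * Real.log n := by rw [← hs2']; ring
    rw [this]
    nlinarith
  have hD : Real.sqrt (2 * n * Real.log n) ≤ 1.4143 * (n * s) := by
    apply Real.sqrt_le_iff.2 ⟨by positivity, ?_⟩
    rw [← hs2']
    have : 0 ≤ (n * s) ^ 2 := by positivity
    nlinarith
  have hDn := Real.sqrt_nonneg (2 * n * Real.log n)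
  set E := 2 + 2 * Real.sqrt (2 * n * Real.log n) with hE
  have hE1 : E ≤ 2.866 * (n * s) := by linarith
  have hE0 : 0 ≤ E := by linarith
  have hκ0 : 250 ≤ κ := by linarith
  have hκn : n / 2 - 1 ≤ κ := by linarith
  have hR : 0.499 * n ≤ (n : ℝ) ^ 2 / (κ + 1) := by
    rw [le_div_iff₀ (by linarith)]
    nlinarith
  have hR0 : (n : ℝ) ^ 2 / κ = (n : ℝ) ^ 2 / (κ + 1) + (n : ℝ) ^ 2 / (κ + 1) * (1 / κ) := by
    field_simp
  have hk : 1 / κ ≤ s := by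
    rw [div_le_iff₀ (by linarith)]
    nlinarith
  set R := (n : ℝ) ^ 2 / (κ + 1) with hRdef
  have hRE : E < R := by nlinarith
  refine ⟨by linarith, ?_⟩
  rw [div_lt_iff₀ (by linarith), hR0]
  have hRp : 0 ≤ R := by linarith
  have h1 : R * (1 / κ) ≤ R * s := mul_le_mul_of_nonneg_left hk hRp
  have h2 : (0.499 * n) * s ≤ R * s := mul_le_mul_of_nonneg_right hR hs0
  have h3 : E * s ≤ E * 0.1125 := mul_le_mul_of_nonneg_left hsup hE0
  nlinarith

/-- **Proposition.** Suppose `n > 2⁹` and `(p 0, …, p (n−1))` is a probability distribution with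
`p 0 ≥ p 1 ≥ … ≥ p (n−1) > 0` and `p 0 / p (n−1) ≤ 2`. Then there is a coloring
`{f i}_{i ∈ Fin n}` of `ℕ` with `d(f i) = p i` and `QR₁(f i) < 1 + 64 √(log n / n)`. -/
theorem exists_coloring_of_flat_distribution (n : ℕ) (hn : 2 ^ 9 < n)
    (p : Fin n → ℝ)
    (hmono : ∀ i j : Fin n, i ≤ j → p j ≤ p i)
    (hpos : ∀ i, 0 < p i)
    (hsum : ∑ i, p i = 1)
    (hratio : p ⟨0, by omega⟩ / p ⟨n - 1, by omega⟩ ≤ 2) :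
    ∃ f : Fin n → ℕ → ℕ, IsColoring f ∧ ∀ i : Fin n,
      HasDensityFun (f i) (p i) ∧
      QRk 1 (f i) < ENNReal.ofReal (1 + 64 * Real.sqrt (Real.log n / n)) := by
  have hn513 : 513 ≤ n := by norm_num at hn; omega
  have hnr : (513 : ℝ) ≤ n := by exact_mod_cast hn513
  have hn0 : (0 : ℝ) < n := by linarith
  -- bounds on the probabilities
  have hmax : ∀ i, p i ≤ p ⟨0, by omega⟩ := fun i => hmono _ _ (Fin.mk_le_of_le_val (Nat.zero_le _))
  have hmin : ∀ i, p ⟨n - 1, by omega⟩ ≤ p i := fun i =>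
    hmono _ _ (by rw [Fin.le_def]; simp only; omega)
  rw [div_le_iff₀ (hpos _)] at hratio
  have hmx : 1 ≤ n * p ⟨0, by omega⟩ := by
    have := Finset.sum_le_sum (s := Finset.univ) (fun i _ => hmax i)
    rw [hsum] at this
    simpa using this
  have hmn : n * p ⟨n - 1, by omega⟩ ≤ 1 := by
    have := Finset.sum_le_sum (s := Finset.univ) (fun i _ => hmin i)
    rw [hsum] at this
    simpa using this
  have hlo : ∀ i, 1 / 2 ≤ n * p i := by
    intro i
    have := mul_le_mul_of_nonneg_left (hmin i) hn0.le
    nlinarith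
  have hhi : ∀ i, n * p i ≤ 2 := by
    intro i
    have := mul_le_mul_of_nonneg_left (hmax i) hn0.le
    nlinarith
  -- block structure
  let P : ℕ → ℝ := fun j => if h : j < n then p ⟨j, h⟩ * (n ^ 2 : ℕ) else 0
  have hP0 : ∀ j, 0 ≤ P j := by
    intro j
    simp only [P]
    split_ifs with h
    · have := hpos ⟨j, h⟩; positivity
    · exact le_rfl
  have hPj : ∀ j : Fin n, P j.1 = p j * (n ^ 2 : ℕ) := by
    intro j; simp [P]
  let S : ℕ → ℝ := fun i => ∑ j ∈ Finset.range i, P j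
  have hS0 : S 0 = 0 := by simp [S]
  have hSs : ∀ i, S (i + 1) = S i + P i := fun i => Finset.sum_range_succ _ _
  have hSnn : ∀ i, 0 ≤ S i := fun i => Finset.sum_nonneg (fun j _ => hP0 j)
  have hSn : S n = (n ^ 2 : ℕ) := by
    simp only [S]
    rw [← Fin.sum_univ_eq_sum_range P n, Finset.sum_congr rfl (fun j _ => hPj j), ← Finset.sum_mul,
      hsum, one_mul]
  let cv : ℝ → Fin n → ℕ := fun u j => ⌊S (j.1 + 1) + u⌋₊ - ⌊S j.1 + u⌋₊
  have hfm : ∀ u j, ⌊S j + u⌋₊ ≤ ⌊S (j + 1) + u⌋₊ := by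
    intro u j
    refine Nat.floor_le_floor ?_
    have := hP0 j
    rw [hSs]; linarith
  have hcvs : ∀ u, 0 ≤ u → u < 1 → ∑ j, cv u j = n ^ 2 := by
    intro u hu hu1
    simp only [cv]
    rw [Fin.sum_univ_eq_sum_range (fun j => ⌊S (j + 1) + u⌋₊ - ⌊S j + u⌋₊) n,
      Finset.sum_range_tsub (f := fun j => ⌊S j + u⌋₊) (monotone_nat_of_le_succ (hfm u))]
    rw [hSn, hS0, zero_add, add_comm, Nat.floor_add_natCast hu]
    omega
  have hcv1 : ∀ u, 0 ≤ u → ∀ j, ⌊p j * (n ^ 2 : ℕ)⌋₊ ≤ cv u j ∧ cv u j ≤ ⌊p j * (n ^ 2 : ℕ)⌋₊ + 1 := by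
    intro u hu j
    have h1 := hfm u j.1
    have h2 := Nat.floor_le (add_nonneg (hSnn j.1) hu)
    have h3 := Nat.lt_floor_add_one (S j.1 + u)
    have h4 := Nat.floor_le (add_nonneg (hSnn (j.1 + 1)) hu)
    have h5 := Nat.lt_floor_add_one (S (j.1 + 1) + u)
    have h6 : 0 ≤ p j * (n ^ 2 : ℕ) := by have := hpos j; positivity
    have h7 := Nat.floor_le h6
    have h8 := Nat.lt_floor_add_one (p j * (n ^ 2 : ℕ))
    have h9 := hSs j.1
    rw [hPj] at h9
    simp only [cv]
    generalize ⌊S j.1 + u⌋₊ = a at *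
    generalize ⌊S (j.1 + 1) + u⌋₊ = b at *
    generalize ⌊p j * (n ^ 2 : ℕ)⌋₊ = d at *
    constructor
    · have : (d : ℝ) + a < b + 1 := by linarith
      have : d + a < b + 1 := by exact_mod_cast this
      omega
    · have : (b : ℝ) < d + a + 2 := by linarith
      have : b < d + a + 2 := by exact_mod_cast this
      omega
  set D := Real.sqrt (2 * n * Real.log n) with hD
  have hlog : 0 ≤ Real.log n := Real.log_nonneg (by linarith)
  obtain ⟨θ, hθ⟩ := aux_theta n (n ^ 2) (n + 1) (by omega) (by positivity)
    (fun k j => cv (Int.fract (-S k.1)) j)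
    (fun k => hcvs _ (Int.fract_nonneg _) (Int.fract_lt_one _)) D (Real.sqrt_nonneg _) (by
      have h1 : D ^ 2 = 2 * n * Real.log n := Real.sq_sqrt (by positivity)
      have h2 : -2 * D ^ 2 / n = -(Real.log n * (4 : ℕ)) := by
        rw [h1]; field_simp; norm_num; ring
      rw [h2, Real.exp_neg, Real.exp_mul, Real.exp_log hn0, Real.rpow_natCast,
        ← div_eq_mul_inv, div_lt_one (by positivity)]
      push_cast
      nlinarith [pow_pos hn0 3, pow_pos hn0 2])
  have hκlow : ∀ j, 1 ≤ ⌊p j * (n ^ 2 : ℕ)⌋₊ := by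
    intro j
    rw [Nat.one_le_floor_iff]
    push_cast
    nlinarith [hlo j]
  have hκup : ∀ j, ⌊p j * (n ^ 2 : ℕ)⌋₊ + 1 ≤ n ^ 2 := by
    intro j
    have h6 : 0 ≤ p j * (n ^ 2 : ℕ) := by have := hpos j; positivity
    have h7 := Nat.floor_le h6
    have h8 : (⌊p j * (n ^ 2 : ℕ)⌋₊ : ℝ) + 1 ≤ (n ^ 2 : ℕ) := by
      push_cast at *
      nlinarith [hhi j]
    exact_mod_cast h8
  obtain ⟨f, hf, hf'⟩ := aux_construct n (n ^ 2) (by omega) (by positivity)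
    (fun b j => cv (auxU b) j) θ (fun j => ⌊p j * (n ^ 2 : ℕ)⌋₊) hκlow hκup
    (fun b j => (hcv1 _ (auxU_nonneg b) j).1) (fun b j => (hcv1 _ (auxU_nonneg b) j).2)
    (fun b => hcvs _ (auxU_nonneg b) (auxU_lt_one b)) D (by
      intro b t ht
      obtain ⟨i, hi, hij⟩ := aux_fin_vec n S hS0 hSnn (auxU b) (auxU_nonneg b) (auxU_lt_one b)
      have hcveq : ∀ j, cv (auxU b) j = cv (Int.fract (-S i)) j := by
        intro j
        have := j.2
        simp only [cv]
        rw [hij j.1 (by rw [Finset.mem_range]; omega), hij (j.1 + 1) (by rw [Finset.mem_range]; omega)]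
      have h := hθ ⟨i, Finset.mem_range.1 hi⟩ t ht
      simp only [hcveq]
      exact h) p (by
      intro j b
      have h1 := aux_avg (S j.1) (hSnn _) b
      have h2 := aux_avg (S (j.1 + 1)) (hSnn _) b
      have h3 : ((∑ b' ∈ Finset.range b, cv (auxU b') j : ℕ) : ℝ)
          = ∑ b' ∈ Finset.range b, ((⌊S (j.1 + 1) + auxU b'⌋₊ : ℕ) : ℝ)
            - ∑ b' ∈ Finset.range b, ((⌊S j.1 + auxU b'⌋₊ : ℕ) : ℝ) := by
        rw [Nat.cast_sum, ← Finset.sum_sub_distrib]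
        exact Finset.sum_congr rfl (fun b' _ => Nat.cast_sub (hfm _ _))
      rw [h3]
      have h4 := hSs j.1
      rw [hPj] at h4
      rw [h4] at h2
      rw [h4]
      rw [abs_le] at *
      constructor <;> linarith)
  refine ⟨f, hf, fun j => ⟨(hf' j).1, ?_⟩⟩
  have h6 : 0 ≤ p j * (n ^ 2 : ℕ) := by have := hpos j; positivity
  obtain ⟨hn1, hn2⟩ := aux_numeric n hn (⌊p j * (n ^ 2 : ℕ)⌋₊ : ℕ) (p j * (n ^ 2 : ℕ))
    (by push_cast; nlinarith [hlo j]) (by push_cast; nlinarith [hhi j])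
    (Nat.floor_le h6) (Nat.lt_floor_add_one _)
  have hQ := aux_QR (f j) (hf.1 j) _ ((n : ℝ) ^ 2 / (⌊p j * (n ^ 2 : ℕ)⌋₊ : ℕ) + (2 + 2 * D)) hn1 (by positivity) (fun k => by
    have := (hf' j).2 k
    push_cast at this ⊢
    exact this)
  refine lt_of_le_of_lt hQ ?_
  rw [ENNReal.ofReal_lt_ofReal_iff (by positivity)]
  exact hn2
end
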